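/- arXiv:2512.06273 — 3 statements merged into one kernel-verified Lean document; each statement's English description precedes it below -/
import Mathlib

section
/- Σ_{w ∈ Sₙ, w² = id} x^{des(w)} = Σ_{λ ⊢ n} Sk_λ(x), the sum over partitions λ of n of the skeleton polynomials. -/
/-- A standard Young tableau with `n` boxes, encoded by the positions
`pos 0, …, pos (n-1)` of the entries `1, …, n` (rows and columns 0-indexed,
coordinates `(row, column)`).  The conditions say: the positions are distinct, their
set is a Young diagram (down-closed), and entries increase along rows and columns. -/
def IsSYT (n : ℕ) (pos : Fin n → Fin n × Fin n) : Prop :=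
  Function.Injective pos ∧
  (∀ (i : Fin n) (a b : Fin n), a ≤ (pos i).1 → b ≤ (pos i).2 → ∃ j, pos j = (a, b)) ∧
  (∀ i j : Fin n,
    (((pos i).1 = (pos j).1 ∧ (pos i).2 < (pos j).2) ∨
     ((pos i).2 = (pos j).2 ∧ (pos i).1 < (pos j).1)) → i < j)

instance (n : ℕ) : DecidablePred (IsSYT n) := fun _ => by
  unfold IsSYT; infer_instance

/-- The type of standard Young tableaux with `n` boxes. -/
abbrev SYT (n : ℕ) := {pos : Fin n → Fin n × Fin n // IsSYT n pos}

/-- The length of row `r` of `T`. -/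
def rowLen (n : ℕ) (T : SYT n) (r : Fin n) : ℕ :=
  (Finset.univ.filter fun i => (T.1 i).1 = r).card

/-- The multiset of (nonzero) row lengths of `T`: its shape as a partition. -/
def rowMult (n : ℕ) (T : SYT n) : Multiset ℕ :=
  ((Finset.univ : Finset (Fin n)).val.map (rowLen n T)).filter (fun x => 0 < x)

/-- The descent set of `T` as a subset of `Fin (n-1)`: `i` records the 1-based
descent `i+1`, i.e. entry `i+2` lies in a strictly lower row than entry `i+1`. -/
def desSet (n : ℕ) (T : SYT n) : Finset (Fin (n - 1)) :=
  Finset.univ.filter fun i =>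
    (T.1 ⟨(i : ℕ), by have := i.isLt; omega⟩).1 <
      (T.1 ⟨(i : ℕ) + 1, by have := i.isLt; omega⟩).1

/-- The descent composition of `T`: the composition of `n` whose partial sums are the
elements of the descent set of `T`. -/
def desComp (n : ℕ) (T : SYT n) : Composition n :=
  ((compositionAsSetEquiv n).symm (desSet n T)).toComposition

/-- The descent set of a permutation, as a subset of `Fin (n-1)`. -/
def permDesSet (n : ℕ) (w : Equiv.Perm (Fin n)) : Finset (Fin (n - 1)) :=
  Finset.univ.filter fun i =>
    w ⟨(i : ℕ) + 1, by have := i.isLt; omega⟩ < w ⟨(i : ℕ), by have := i.isLt; omega⟩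

/-- The descent composition of a permutation. -/
def permDesComp (n : ℕ) (w : Equiv.Perm (Fin n)) : Composition n :=
  ((compositionAsSetEquiv n).symm (permDesSet n w)).toComposition

/-- The exponent vector of the monomial `x^α = x₁^{α₁}⋯x_l^{α_l}`. -/
noncomputable def expOf (n : ℕ) (α : Composition n) : Fin n →₀ ℕ :=
  ∑ i : Fin α.length,
    Finsupp.single ⟨(i : ℕ), lt_of_lt_of_le i.isLt α.length_le⟩ (α.blocksFun i)

/-- The skeleton polynomial `Sk_λ(x) = Σ_{T ∈ ST(λ)} x^{des T}`. -/
noncomputable def Sk (n : ℕ) (p : n.Partition) : MvPolynomial (Fin n) ℂ :=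
  ∑ T : {T : SYT n // rowMult n T = p.parts},
    MvPolynomial.monomial (expOf n (desComp n T.1)) (1 : ℂ)

namespace GrowthRSK

/-- Local rule for a growth square, with labels `row + 1` (`0` for an empty step). -/
def Step (a b a' b' : ℕ) (x : Prop) : Prop :=
  (a' = b' ∧ a = a' - 1 ∧ b = b' - 1 ∧ (x ↔ a' = 1)) ∨ (a' ≠ b' ∧ a = a' ∧ b = b' ∧ ¬ x)

def Growth (n : ℕ) (X : ℕ → ℕ → Prop) (h : ℕ → ℕ → ℕ) : Prop :=
  ∀ i j, i < n → j < n → Step (h i j) (h j i) (h (i + 1) j) (h (j + 1) i) (X i j)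

open Classical in
/-- forward growth -/
noncomputable def fw (X : ℕ → ℕ → Prop) : ℕ → ℕ → ℕ
  | 0, _ => 0
  | i + 1, j =>
    if X i j then 1 else
    if fw X i j = fw X j i then (if fw X i j = 0 then 0 else fw X i j + 1) else fw X i j
termination_by i j => i + j
decreasing_by all_goals omega

theorem fw_zero_iff (X : ℕ → ℕ → Prop) (i j : ℕ) :
    fw X i j = 0 ↔ ∀ i' < i, ¬ X i' j := by
  induction i with
  | zero => simp [fw]
  | succ i ih =>
    rw [fw, Nat.forall_lt_succ_right, ← ih]
    split_ifs <;> simp_all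

theorem fw_growth (n : ℕ) (X : ℕ → ℕ → Prop) (hs : ∀ i j, X i j → X j i)
    (hu : ∀ i i' j, X i j → X i' j → i = i') : Growth n X (fw X) := by
  intro i j _ _
  have hz : ∀ i j, X i j → fw X i j = 0 := by
    intro i j hx
    rw [fw_zero_iff]
    intro i' hi' hx'
    have := hu _ _ _ hx hx'
    omega
  have e1 : fw X (i + 1) j = _ := fw.eq_2 X j i
  have e2 : fw X (j + 1) i = _ := fw.eq_2 X i j
  have h1 := hz i j
  have h2 := hz j i
  rw [e1, e2]
  have h3 := hs i j
  have h4 := hs j i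
  unfold Step
  by_cases hx : X i j
  · simp [hx, h3 hx, h1 hx, h2 (h3 hx)]
  · have hx' : ¬ X j i := fun h => hx (h4 h)
    simp only [hx, hx', if_false]
    split_ifs <;> simp <;> omega

/-- backward growth -/
def bw (n : ℕ) (P : ℕ → ℕ) (i j : ℕ) : ℕ :=
  if h : i < n ∧ j < n then
    if bw n P (i + 1) j = bw n P (j + 1) i then bw n P (i + 1) j - 1 else bw n P (i + 1) j
  else P j
termination_by (n - i) + (n - j)
decreasing_by all_goals omega

theorem bw_growth (n : ℕ) (P : ℕ → ℕ) :
    Growth n (fun i j => bw n P (i + 1) j = 1 ∧ bw n P (j + 1) i = 1) (bw n P) := by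
  intro i j hi hj
  have e1 : bw n P i j = _ := bw.eq_1 n P i j
  have e2 : bw n P j i = _ := bw.eq_1 n P j i
  rw [dif_pos ⟨hi, hj⟩] at e1
  rw [dif_pos ⟨hj, hi⟩] at e2
  rw [e1, e2]
  unfold Step
  split_ifs <;> omega

theorem bw_top (n : ℕ) (P : ℕ → ℕ) (j : ℕ) : bw n P n j = P j := by
  rw [bw, dif_neg]; omega

theorem fw_unique {n : ℕ} {X : ℕ → ℕ → Prop} {h h' : ℕ → ℕ → ℕ} (g : Growth n X h)
    (g' : Growth n X h') (z : ∀ j < n, h 0 j = 0) (z' : ∀ j < n, h' 0 j = 0) :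
    ∀ s i j, i + j = s → i ≤ n → j < n → h i j = h' i j := by
  intro s
  induction s using Nat.strong_induction_on with
  | _ s ih =>
    intro i j hs hi hj
    cases i with
    | zero => rw [z j hj, z' j hj]
    | succ i =>
      have a := g i j (by omega) hj
      have b := g' i j (by omega) hj
      have c := ih (i + j) (by omega) i j rfl (by omega) hj
      have d := ih (j + i) (by omega) j i rfl (by omega) (by omega)
      unfold Step at a b
      by_cases hx : X i j <;> simp only [hx, true_iff, false_iff, not_true_eq_false, not_false_eq_true, and_true, and_false, or_false] at a b <;> omega

theorem bw_unique {n : ℕ} {X X' : ℕ → ℕ → Prop} {h h' : ℕ → ℕ → ℕ} (g : Growth n X h)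
    (g' : Growth n X' h') (z : ∀ j < n, h n j = h' n j) :
    ∀ s i j, (n - i) + (n - j) = s → i ≤ n → j < n → h i j = h' i j := by
  intro s
  induction s using Nat.strong_induction_on with
  | _ s ih =>
    intro i j hs hi hj
    rcases hi.eq_or_lt with rfl | hi
    · exact z j hj
    · have a := g i j (by omega) hj
      have b := g' i j (by omega) hj
      have c := ih _ (by omega) (i + 1) j rfl (by omega) hj
      have d := ih _ (by omega) (j + 1) i rfl (by omega) (by omega)
      unfold Step at a b
      omega

theorem bw_unique_X {n : ℕ} {X X' : ℕ → ℕ → Prop} {h h' : ℕ → ℕ → ℕ} (g : Growth n X h)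
    (g' : Growth n X' h') (z : ∀ j < n, h n j = h' n j) (i j : ℕ) (hi : i < n) (hj : j < n) :
    X i j ↔ X' i j := by
  have a := g i j (by omega) hj
  have b := g' i j (by omega) hj
  have c := bw_unique g g' z _ (i + 1) j rfl (by omega) hj
  have d := bw_unique g g' z _ (j + 1) i rfl (by omega) (by omega)
  unfold Step at a b
  by_cases hx : X i j <;> by_cases hx' : X' i j <;>
    simp only [hx, hx', true_iff, false_iff, not_true_eq_false, not_false_eq_true, and_true, and_false, or_false] at a b ⊢ <;> omega

/-- indicator -/
def ind (a r : ℕ) : ℤ := if a = r then 1 else 0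

def Part (f : ℕ → ℤ) : Prop := ∀ r, 1 ≤ r → f (r + 1) ≤ f r

theorem step_ind {a b a' b' : ℕ} {x : Prop} (s : Step a b a' b' x) (r : ℕ) (hr : 1 ≤ r) :
    ind a r + ind b' r = ind b r + ind a' r := by
  unfold Step at s; unfold ind
  split_ifs <;> omega

theorem part_fwd {a b a' b' : ℕ} {x : Prop} (s : Step a b a' b' x) (f : ℕ → ℤ) (h0 : Part f)
    (h1 : Part fun r => f r + ind a r) (h2 : Part fun r => f r + ind b r) :
    Part fun r => f r + ind a r + ind b' r := by
  intro r hr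
  have h0 := h0 r hr
  have h1 := h1 r hr
  have h2 := h2 r hr
  unfold Step at s; unfold ind at *
  simp only at *
  split_ifs at * <;> omega

theorem part_bwd {a b a' b' : ℕ} {x : Prop} (s : Step a b a' b' x) (f : ℕ → ℤ)
    (h0 : Part fun r => f r + ind a r + ind b' r)
    (h1 : Part fun r => f r + ind a r) (h2 : Part fun r => f r + ind b r) :
    Part f := by
  intro r hr
  have h0 := h0 r hr
  have h1 := h1 r hr
  have h2 := h2 r hr
  unfold Step at s; unfold ind at *
  simp only at *
  split_ifs at * <;> omega

open Finset in
/-- Shapes, up to the (a priori unknown) shape at the origin. -/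
def S (h : ℕ → ℕ → ℕ) (i j r : ℕ) : ℤ :=
  ∑ k ∈ range i, ind (h 0 k) r + ∑ k ∈ range j, ind (h i k) r

theorem S_right (h : ℕ → ℕ → ℕ) (i j r : ℕ) : S h i (j + 1) r = S h i j r + ind (h i j) r := by
  simp [S, Finset.sum_range_succ, add_assoc]

theorem S_up {n : ℕ} {X : ℕ → ℕ → Prop} {h : ℕ → ℕ → ℕ} (g : Growth n X h) (i j r : ℕ)
    (hi : i < n) (hj : j ≤ n) (hr : 1 ≤ r) :
    S h (i + 1) j r = S h i j r + ind (h j i) r := by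
  induction j with
  | zero => simp [S, Finset.sum_range_succ]
  | succ j ih =>
    rw [S_right, S_right, ih (by omega)]
    have := step_ind (g i j hi (by omega)) r hr
    linarith

theorem S_symm {n : ℕ} {X : ℕ → ℕ → Prop} {h : ℕ → ℕ → ℕ} (g : Growth n X h) (i j r : ℕ)
    (hi : i ≤ n) (hj : j ≤ n) (hr : 1 ≤ r) : S h i j r = S h j i r := by
  induction i with
  | zero => simp [S]
  | succ i ih => rw [S_right, S_up g _ _ _ (by omega) hj hr, ih (by omega)]

theorem part_congr {f f' : ℕ → ℤ} (e : ∀ r, 1 ≤ r → f r = f' r) (p : Part f) : Part f' := by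
  intro r hr
  rw [← e r hr, ← e (r + 1) (by omega)]
  exact p r hr

theorem shapes_fwd {n : ℕ} {X : ℕ → ℕ → Prop} {h : ℕ → ℕ → ℕ} (g : Growth n X h)
    (z : ∀ j < n, h 0 j = 0) :
    ∀ s i j, i + j = s → i ≤ n → j ≤ n → Part (S h i j) := by
  have base : ∀ j ≤ n, ∀ r, 1 ≤ r → S h 0 j r = 0 := by
    intro j hj r hr
    simp only [S, Finset.range_zero, Finset.sum_empty, zero_add]
    apply Finset.sum_eq_zero
    intro k hk
    rw [z k (by simp at hk; omega), ind, if_neg (by omega)]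
  intro s
  induction s using Nat.strong_induction_on with
  | _ s ih =>
    intro i j hs hi hj
    rcases i with _ | i
    · intro r hr
      rw [base j hj r hr, base j hj _ (by omega)]
    rcases j with _ | j
    · intro r hr
      rw [S_symm g _ _ _ hi hj hr, S_symm g _ _ _ hi hj (by omega),
        base _ hi r hr, base _ hi _ (by omega)]
    have p := part_fwd (g i j (by omega) (by omega)) (S h i j)
      (ih _ (by omega) i j rfl (by omega) (by omega))
      (part_congr (fun r hr => S_right h i j r) (ih _ (by omega) i (j + 1) rfl (by omega) (by omega)))
      (part_congr (fun r hr => S_up g i j r (by omega) (by omega) hr)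
        (ih _ (by omega) (i + 1) j rfl (by omega) (by omega)))
    refine part_congr (fun r hr => ?_) p
    rw [S_up g i (j + 1) r (by omega) (by omega) hr, S_right]

theorem shapes_bwd {n : ℕ} {X : ℕ → ℕ → Prop} {h : ℕ → ℕ → ℕ} (g : Growth n X h) (κ : ℕ → ℤ)
    (z : ∀ j ≤ n, Part fun r => κ r + S h n j r) :
    ∀ s i j, (n - i) + (n - j) = s → i ≤ n → j ≤ n → Part fun r => κ r + S h i j r := by
  intro s
  induction s using Nat.strong_induction_on with
  | _ s ih =>
    intro i j hs hi hj
    rcases hi.eq_or_lt with rfl | hi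
    · exact z j hj
    rcases hj.eq_or_lt with rfl | hj
    · refine part_congr (fun r hr => ?_) (z i hi.le)
      rw [S_symm g _ _ _ le_rfl hi.le hr]
    apply part_bwd (g i j hi hj)
    · refine part_congr (fun r hr => ?_) (ih _ (by omega) (i + 1) (j + 1) rfl (by omega) (by omega))
      rw [S_up g i (j + 1) r (by omega) (by omega) hr, S_right]; ring
    · refine part_congr (fun r hr => ?_) (ih _ (by omega) i (j + 1) rfl (by omega) (by omega))
      rw [S_right]; ring
    · refine part_congr (fun r hr => ?_) (ih _ (by omega) (i + 1) j rfl (by omega) (by omega))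
      rw [S_up g i j r (by omega) (by omega) hr]; ring

/-- Ballot words (labels `row + 1`). -/
def Ballot (n : ℕ) (P : ℕ → ℕ) : Prop :=
  (∀ j < n, 1 ≤ P j) ∧ ∀ k ≤ n, Part fun r => ∑ j ∈ Finset.range k, ind (P j) r

theorem ind_nonneg (a r : ℕ) : 0 ≤ ind a r := by unfold ind; split_ifs <;> simp

theorem bwd_zero {n : ℕ} {X : ℕ → ℕ → Prop} {h : ℕ → ℕ → ℕ} (g : Growth n X h)
    (b : Ballot n (h n)) : ∀ j < n, h 0 j = 0 := by
  have p := shapes_bwd g (fun r => - ∑ k ∈ Finset.range n, ind (h 0 k) r) (by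
    intro j hj
    refine part_congr (fun r hr => ?_) (b.2 j hj)
    simp [S]) _ 0 0 rfl (by omega) (by omega)
  simp only [S, Finset.range_zero, Finset.sum_empty, add_zero] at p
  intro j hj
  by_contra hne
  have mono : ∀ d, - ∑ k ∈ Finset.range n, ind (h 0 k) (h 0 j + d)
      ≤ - ∑ k ∈ Finset.range n, ind (h 0 k) (h 0 j) := by
    intro d
    induction d with
    | zero => simp
    | succ d ih => exact (p (h 0 j + d) (by omega)).trans ih
  have big := mono (∑ k ∈ Finset.range n, h 0 k + 1)
  have e0 : ∑ k ∈ Finset.range n, ind (h 0 k) (h 0 j + (∑ k ∈ Finset.range n, h 0 k + 1)) = 0 := by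
    apply Finset.sum_eq_zero
    intro k hk
    have := Finset.single_le_sum (f := fun k => h 0 k) (fun _ _ => Nat.zero_le _) hk
    rw [ind, if_neg (by omega)]
  have e1 := Finset.single_le_sum (f := fun k => ind (h 0 k) (h 0 j))
    (fun _ _ => ind_nonneg _ _) (Finset.mem_range.2 hj)
  simp only [ind, if_true] at e1
  simp only [ind] at big e0
  omega

/-- zero labels vs. crosses -/
theorem growth_zero_iff {n : ℕ} {X : ℕ → ℕ → Prop} {h : ℕ → ℕ → ℕ} (g : Growth n X h)
    (z : ∀ j < n, h 0 j = 0) (i j : ℕ) (hi : i ≤ n) (hj : j < n) :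
    h i j = 0 ↔ ∀ i' < i, ¬ X i' j := by
  induction i with
  | zero => simp [z j hj]
  | succ i ih =>
    rw [Nat.forall_lt_succ_right, ← ih (by omega)]
    have := g i j (by omega) hj
    unfold Step at this
    by_cases hx : X i j <;> simp only [hx, true_iff, false_iff, iff_false, not_true_eq_false, not_false_eq_true, and_true, and_false, or_false] at this ⊢ <;> omega

theorem growth_X {n : ℕ} {X : ℕ → ℕ → Prop} {h : ℕ → ℕ → ℕ} (g : Growth n X h)
    (i j : ℕ) (hi : i < n) (hj : j < n) (hx : X i j) : h i j = 0 := by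
  have := g i j (by omega) hj
  unfold Step at this
  simp only [hx, true_iff, not_true_eq_false, and_false, or_false] at this
  omega

theorem asc {n : ℕ} {X : ℕ → ℕ → Prop} {h : ℕ → ℕ → ℕ} (g : Growth n X h)
    (z : ∀ j < n, h 0 j = 0) (j p q : ℕ) (hj : j + 1 < n) (hp : X p j) (hq : ∀ i, X i (j + 1) → i = q)
    (hpq : p < q) (i : ℕ) (hi : i ≤ n) : h i (j + 1) ≤ h i j := by
  induction i with
  | zero => rw [z, z] <;> omega
  | succ i ih =>
    have ih := ih (by omega)
    have a := g i j (by omega) (by omega)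
    have b := g i (j + 1) (by omega) (by omega)
    have c : X i (j + 1) → h i j ≠ 0 := by
      intro hx h0
      rw [growth_zero_iff g z i j (by omega) (by omega)] at h0
      exact h0 p (by have := hq i hx; omega) hp
    unfold Step at a b
    by_cases hx : X i j <;> by_cases hy : X i (j + 1) <;>
      simp only [hx, hy, true_iff, false_iff, not_true_eq_false, not_false_eq_true, and_true, and_false, or_false, true_imp_iff] at a b c <;> omega

theorem desc {n : ℕ} {X : ℕ → ℕ → Prop} {h : ℕ → ℕ → ℕ} (g : Growth n X h)
    (z : ∀ j < n, h 0 j = 0) (j p q : ℕ) (hj : j + 1 < n) (hq : X q (j + 1)) (hp : ∀ i, X i j → i = p)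
    (hpq : q < p) (i : ℕ) (hi : i ≤ n) :
    (h i j = 0 ∧ h i (j + 1) = 0) ∨ h i j < h i (j + 1) := by
  induction i with
  | zero => rw [z, z] <;> omega
  | succ i ih =>
    have ih := ih (by omega)
    have a := g i j (by omega) (by omega)
    have b := g i (j + 1) (by omega) (by omega)
    have c : X i j → h i (j + 1) ≠ 0 := by
      intro hx h0
      rw [growth_zero_iff g z i (j + 1) (by omega) (by omega)] at h0
      exact h0 q (by have := hp i hx; omega) hq
    unfold Step at a b
    by_cases hx : X i j <;> by_cases hy : X i (j + 1) <;>
      simp only [hx, hy, true_iff, false_iff, not_true_eq_false, not_false_eq_true, and_true, and_false, or_false, true_imp_iff] at a b c <;> omega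

/-- The row word of a tableau. -/
def word (n : ℕ) (T : SYT n) (j : ℕ) : ℕ :=
  if h : j < n then ((T.1 ⟨j, h⟩).1 : ℕ) + 1 else 0

/-- counting -/
def cnt (P : ℕ → ℕ) (k r : ℕ) : ℕ := ((Finset.range k).filter fun j => P j = r).card

theorem cnt_cast (P : ℕ → ℕ) (k r : ℕ) :
    ∑ j ∈ Finset.range k, ind (P j) r = (cnt P k r : ℤ) := by
  simp [ind, cnt]

theorem cnt_succ (P : ℕ → ℕ) (k r : ℕ) :
    cnt P (k + 1) r = cnt P k r + if P k = r then 1 else 0 := by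
  unfold cnt
  rw [Finset.range_add_one, Finset.filter_insert]
  split_ifs <;> simp

theorem cnt_mono (P : ℕ → ℕ) (r : ℕ) : Monotone fun k => cnt P k r :=
  monotone_nat_of_le_succ fun k => by simp [cnt_succ]

theorem cnt_ivt (P : ℕ → ℕ) (r b k : ℕ) (h : b < cnt P k r) :
    ∃ j < k, P j = r ∧ cnt P j r = b := by
  induction k with
  | zero => simp [cnt] at h
  | succ k ih =>
    by_cases hb : b < cnt P k r
    · obtain ⟨j, hj, h'⟩ := ih hb
      exact ⟨j, by omega, h'⟩
    · rw [cnt_succ] at h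
      split_ifs at h with hp
      · exact ⟨k, by omega, hp, by omega⟩
      · omega

theorem ballot_iff (n : ℕ) (P : ℕ → ℕ) : Ballot n P ↔
    (∀ j < n, 1 ≤ P j) ∧ ∀ k ≤ n, ∀ r, 1 ≤ r → cnt P k (r + 1) ≤ cnt P k r := by
  unfold Ballot Part
  simp only [cnt_cast, Nat.cast_le]

theorem word_ballot (n : ℕ) (T : SYT n) : Ballot n (word n T) := by
  rw [ballot_iff]
  constructor
  · intro j hj; simp [word, hj]
  intro k hk r hr
  obtain ⟨hinj, hdown, hinc⟩ := T.2
  have key : ∀ j : ℕ, j < k → word n T j = r + 1 → ∃ j' : ℕ, j' < k ∧ word n T j' = r ∧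
      ∀ (h : j < n) (h' : j' < n), (T.1 ⟨j, h⟩).2 = (T.1 ⟨j', h'⟩).2 := by
    intro j hj hw
    have hjn : j < n := by omega
    simp only [word, hjn, dif_pos] at hw
    have hrow : ((T.1 ⟨j, hjn⟩).1 : ℕ) = r := by omega
    have hrn : r < n := by rw [← hrow]; exact (T.1 ⟨j, hjn⟩).1.isLt
    obtain ⟨j', hj'⟩ := hdown ⟨j, hjn⟩ ⟨r - 1, by omega⟩ (T.1 ⟨j, hjn⟩).2
      (by rw [Fin.le_def]; simp; omega) le_rfl
    have hlt : j' < ⟨j, hjn⟩ := by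
      apply hinc
      right
      rw [hj']
      refine ⟨rfl, ?_⟩
      rw [Fin.lt_def]; simp; omega
    rw [Fin.lt_def] at hlt
    refine ⟨j', by simp at hlt; omega, ?_, ?_⟩
    · simp [word, hj']; omega
    · intro _ _; simp [hj']
  choose! f hf using key
  unfold cnt
  apply Finset.card_le_card_of_injOn f
  · intro j hj
    simp only [Finset.coe_filter, Finset.mem_range, Set.mem_ofPred_eq] at hj ⊢
    exact ⟨(hf j hj.1 hj.2).1, (hf j hj.1 hj.2).2.1⟩
  · intro j hj j' hj' e
    simp only [Finset.coe_filter, Finset.mem_range, Set.mem_ofPred_eq] at hj hj'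
    have a := hf j hj.1 hj.2
    have b := hf j' hj'.1 hj'.2
    have hjn : j < n := by omega
    have hjn' : j' < n := by omega
    have c1 := a.2.2 hjn (by omega)
    have c2 := b.2.2 hjn' (by omega)
    have c3 : (T.1 ⟨j, hjn⟩).2 = (T.1 ⟨j', hjn'⟩).2 := by
      rw [c1, c2]; simp only [e]
    have w1 := hj.2
    have w2 := hj'.2
    simp only [word, hjn, hjn', dif_pos] at w1 w2
    have := hinj (a₁ := ⟨j, hjn⟩) (a₂ := ⟨j', hjn'⟩) (Prod.ext (Fin.ext (by omega)) c3)
    simpa using this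

theorem col_eq (n : ℕ) (T : SYT n) (i : Fin n) :
    ((T.1 i).2 : ℕ) = (Finset.univ.filter fun j => j < i ∧ (T.1 j).1 = (T.1 i).1).card := by
  obtain ⟨hinj, hdown, hinc⟩ := T.2
  rw [← Finset.card_image_of_injOn (f := fun j => ((T.1 j).2 : ℕ))]
  · rw [← Finset.card_range ((T.1 i).2 : ℕ)]
    congr 1
    ext b
    simp only [Finset.mem_range, Finset.mem_image, Finset.mem_filter, Finset.mem_univ, true_and]
    constructor
    · intro hb
      have hbn : b < n := hb.trans (T.1 i).2.isLt
      obtain ⟨j, hj⟩ := hdown i (T.1 i).1 ⟨b, hbn⟩ le_rfl (by rw [Fin.le_def]; exact hb.le)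
      refine ⟨j, ⟨hinc _ _ (Or.inl ⟨by rw [hj], by rw [hj]; exact hb⟩), by rw [hj]⟩, by rw [hj]⟩
    · rintro ⟨j, ⟨hlt, hr⟩, rfl⟩
      by_contra hc
      rcases (not_lt.1 hc).eq_or_lt with e | e
      · have := hinj (Prod.ext hr (Fin.ext e.symm))
        exact hlt.ne this
      · exact (hinc i j (Or.inl ⟨hr.symm, e⟩)).not_gt hlt
  · intro j hj j' hj' e
    simp only [Finset.coe_filter, Finset.mem_univ, true_and, Set.mem_ofPred_eq] at hj hj'
    exact hinj (Prod.ext (hj.2.trans hj'.2.symm) (Fin.ext e))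

theorem word_inj (n : ℕ) (T T' : SYT n) (h : ∀ j < n, word n T j = word n T' j) : T = T' := by
  have hr : ∀ i, (T.1 i).1 = (T'.1 i).1 := by
    intro i
    have := h i i.isLt
    simp only [word, i.isLt, dif_pos] at this
    exact Fin.ext (by simpa using this)
  apply Subtype.ext
  funext i
  refine Prod.ext (hr i) (Fin.ext ?_)
  rw [col_eq, col_eq]
  simp only [hr]

theorem word_surj (n : ℕ) (P : ℕ → ℕ) (b : Ballot n P) :
    ∃ T : SYT n, ∀ j < n, word n T j = P j := by
  rw [ballot_iff] at b
  obtain ⟨bpos, bb⟩ := b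
  have anti : ∀ k ≤ n, ∀ r d, 1 ≤ r → cnt P k (r + d) ≤ cnt P k r := by
    intro k hk r d hr
    induction d with
    | zero => simp
    | succ d ih => exact (bb k hk (r + d) (by omega)).trans ih
  have anti' : ∀ k ≤ n, ∀ r r', 1 ≤ r → r ≤ r' → cnt P k r' ≤ cnt P k r := by
    intro k hk r r' hr hrr
    obtain ⟨d, rfl⟩ := Nat.exists_eq_add_of_le hrr
    exact anti k hk r d hr
  have hrow : ∀ r, ∀ j < n, P j = r + 1 → r ≤ j := by
    intro r
    induction r with
    | zero => intros; omega
    | succ r ih =>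
      intro j hj hp
      have h1 := bb (j + 1) (by omega) (r + 1) (by omega)
      rw [cnt_succ, cnt_succ, if_pos hp, if_neg (by omega)] at h1
      obtain ⟨j', hj', hp', _⟩ := cnt_ivt P (r + 1) 0 j (by omega)
      have := ih j' (by omega) hp'
      omega
  have hcol : ∀ j r, cnt P j r ≤ j := by
    intro j r
    unfold cnt
    exact (Finset.card_filter_le _ _).trans (by simp)
  have hself : ∀ j, cnt P (j + 1) (P j) = cnt P j (P j) + 1 := by
    intro j; rw [cnt_succ, if_pos rfl]
  let pos : Fin n → Fin n × Fin n := fun i =>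
    (⟨P i - 1, by
      have := bpos i i.isLt
      have := hrow (P i - 1) i i.isLt (by omega)
      have := i.isLt
      omega⟩, ⟨cnt P i (P i), (hcol _ _).trans_lt i.isLt⟩)
  have hlt : ∀ i j : Fin n, i < j → P i = P j → cnt P i (P i) < cnt P j (P j) := by
    intro i j hij e
    have h1 := hself i
    have h2 : cnt P (i + 1) (P j) ≤ cnt P j (P j) := cnt_mono P (P j) (Nat.succ_le_of_lt hij)
    rw [← e] at h2 ⊢
    omega
  refine ⟨⟨pos, ?_, ?_, ?_⟩, ?_⟩
  · intro i j e
    have e1 := congrArg (fun x => (x.1 : ℕ)) e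
    have e2 := congrArg (fun x => (x.2 : ℕ)) e
    simp only [pos] at e1 e2
    have := bpos i i.isLt
    have := bpos j j.isLt
    have e3 : P i = P j := by omega
    rcases lt_trichotomy i j with h | h | h
    · have := hlt i j h e3; omega
    · exact h
    · have := hlt j i h e3.symm; omega
  · intro i a c ha hc
    rw [Fin.le_def] at ha hc
    simp only [pos] at ha hc
    have p1 := bpos i i.isLt
    have h1 := hself i
    have h2 := anti' (i + 1) i.isLt (a + 1) (P i) (by omega) (by omega)
    obtain ⟨j, hj, e1, e2⟩ := cnt_ivt P (a + 1) c (i + 1) (by omega)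
    have := i.isLt
    refine ⟨⟨j, by omega⟩, Prod.ext (Fin.ext ?_) (Fin.ext ?_)⟩
    · simp [pos, e1]
    · simp [pos, e1, e2]
  · intro i j hij
    simp only [pos, Fin.lt_def, Fin.ext_iff] at hij ⊢
    have p1 := bpos i i.isLt
    have p2 := bpos j j.isLt
    by_contra hc
    rcases (not_lt.1 hc).eq_or_lt with e | e
    · rw [e] at hij; omega
    · rcases hij with ⟨h1, h2⟩ | ⟨h1, h2⟩
      · have := hlt j i e (by omega); omega
      · have e1 := hself j
        have e2 := anti' (j + 1) j.isLt (P i) (P j) p1 (by omega)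
        have e3 : cnt P (j + 1) (P i) ≤ cnt P i (P i) := cnt_mono P (P i) (Nat.succ_le_of_lt e)
        omega
  · intro j hj
    have := bpos j hj
    simp [word, hj, pos]; omega

/-- permutation matrix -/
def XX (n : ℕ) (w : Equiv.Perm (Fin n)) (i j : ℕ) : Prop := ∃ hj : j < n, (w ⟨j, hj⟩ : ℕ) = i

def R (n : ℕ) (w : Equiv.Perm (Fin n)) (T : SYT n) : Prop :=
  ∃ h, Growth n (XX n w) h ∧ (∀ j < n, h 0 j = 0) ∧ ∀ j < n, h n j = word n T j

theorem R_total (n : ℕ) (w : Equiv.Perm (Fin n)) (hw : w * w = 1) : ∃ T, R n w T := by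
  have hww : ∀ i, w (w i) = i := fun i => by
    rw [← Equiv.Perm.mul_apply, hw, Equiv.Perm.one_apply]
  have g := fw_growth n (XX n w) (by
    rintro i j ⟨hj, rfl⟩
    exact ⟨(w ⟨j, hj⟩).isLt, by simp [hww]⟩) (by
    rintro i i' j ⟨hj, rfl⟩ ⟨_, rfl⟩
    rfl)
  have z : ∀ j < n, fw (XX n w) 0 j = 0 := by intro j _; simp [fw]
  have b : Ballot n (fw (XX n w) n) := by
    constructor
    · intro j hj
      by_contra hc
      have h0 : fw (XX n w) n j = 0 := by omega
      rw [fw_zero_iff] at h0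
      exact h0 _ (w ⟨j, hj⟩).isLt ⟨hj, rfl⟩
    · intro k hk
      refine part_congr (fun r hr => ?_) (shapes_fwd g z _ n k rfl le_rfl hk)
      simp only [S]
      rw [add_eq_right]
      apply Finset.sum_eq_zero
      intro j hj
      rw [z j (by simpa using hj), ind, if_neg (by omega)]
  obtain ⟨T, hT⟩ := word_surj n _ b
  exact ⟨T, _, g, z, fun j hj => (hT j hj).symm⟩

theorem R_fun (n : ℕ) (w : Equiv.Perm (Fin n)) (T T' : SYT n) (h : R n w T) (h' : R n w T') :
    T = T' := by
  obtain ⟨f, g, z, t⟩ := h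
  obtain ⟨f', g', z', t'⟩ := h'
  apply word_inj
  intro j hj
  rw [← t j hj, ← t' j hj]
  exact fw_unique g g' z z' _ n j rfl le_rfl hj

theorem R_inj (n : ℕ) (w w' : Equiv.Perm (Fin n)) (T : SYT n) (h : R n w T) (h' : R n w' T) :
    w = w' := by
  obtain ⟨f, g, z, t⟩ := h
  obtain ⟨f', g', z', t'⟩ := h'
  ext j
  have := (bw_unique_X g g' (fun j hj => (t j hj).trans (t' j hj).symm) (w j) j (w j).isLt j.isLt).1
    ⟨j.isLt, rfl⟩
  obtain ⟨_, e⟩ := this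
  exact e.symm

theorem growth_congr {n : ℕ} {X X' : ℕ → ℕ → Prop} {h : ℕ → ℕ → ℕ} (g : Growth n X h)
    (e : ∀ i j, i < n → j < n → (X i j ↔ X' i j)) : Growth n X' h := by
  intro i j hi hj
  have := g i j hi hj
  unfold Step at *
  rwa [e i j hi hj] at this

theorem R_surj (n : ℕ) (T : SYT n) : ∃ w : Equiv.Perm (Fin n), w * w = 1 ∧ R n w T := by
  have g := bw_growth n (word n T)
  have top : bw n (word n T) n = word n T := funext (bw_top n _)
  have z := bwd_zero g (by rw [top]; exact word_ballot n T)
  generalize hh : bw n (word n T) = h at *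
  set X : ℕ → ℕ → Prop := fun i j => h (i + 1) j = 1 ∧ h (j + 1) i = 1 with hX
  have hex : ∀ j : Fin n, ∃ i : Fin n, X i j := by
    intro j
    by_contra hc
    push Not at hc
    have h0 := (growth_zero_iff g z n j le_rfl j.isLt).2 (fun i hi => hc ⟨i, hi⟩)
    rw [top] at h0
    simp [word] at h0
  have huniq' : ∀ i i' j : ℕ, i < i' → i' < n → j < n → X i j → X i' j → False := by
    intro i i' j hi hi' hj hx hx'
    have h0 := growth_X g i' j hi' hj hx'
    rw [growth_zero_iff g z i' j hi'.le hj] at h0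
    exact h0 i hi hx
  have huniq : ∀ i i' j : Fin n, X i j → X i' j → i = i' := by
    intro i i' j hx hx'
    rcases lt_trichotomy i i' with l | l | l
    · exact (huniq' i i' j l i'.isLt j.isLt hx hx').elim
    · exact l
    · exact (huniq' i' i j l i.isLt j.isLt hx' hx).elim
  choose f hf using hex
  have inv : Function.Involutive f := fun j => huniq _ _ _ (hf (f j)) (And.symm (hf j))
  refine ⟨inv.toPerm, ?_, h, growth_congr g ?_, z, fun j _ => by rw [top]⟩
  · ext j; simp [inv j]
  · intro i j hi hj
    constructor
    · intro hx
      exact ⟨hj, congrArg Fin.val (huniq (f ⟨j, hj⟩) ⟨i, hi⟩ ⟨j, hj⟩ (hf _) hx)⟩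
    · rintro ⟨_, e⟩
      have := hf ⟨j, hj⟩
      rw [← e]
      exact this

theorem R_des (n : ℕ) (w : Equiv.Perm (Fin n)) (T : SYT n) (h : R n w T) :
    permDesSet n w = desSet n T := by
  obtain ⟨f, g, z, t⟩ := h
  ext ⟨j, hj⟩
  have hj1 : j + 1 < n := by omega
  have hj0 : j < n := by omega
  simp only [permDesSet, desSet, Finset.mem_filter, Finset.mem_univ, true_and]
  have t1 := t (j + 1) hj1
  have t0 := t j hj0
  simp only [word, hj1, hj0, dif_pos] at t1 t0
  rw [Fin.lt_def, Fin.lt_def]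
  rcases lt_trichotomy (w ⟨j, hj0⟩) (w ⟨j + 1, hj1⟩) with l | l | l
  · have := asc g z j (w ⟨j, hj0⟩) (w ⟨j + 1, hj1⟩) hj1 ⟨hj0, rfl⟩
      (by rintro i ⟨_, rfl⟩; rfl) l n le_rfl
    rw [Fin.lt_def] at l
    constructor <;> intro <;> omega
  · have := w.injective l
    simp at this
  · have := desc g z j (w ⟨j, hj0⟩) (w ⟨j + 1, hj1⟩) hj1 ⟨hj1, rfl⟩
      (by rintro i ⟨_, rfl⟩; rfl) l n le_rfl
    rw [Fin.lt_def] at l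
    constructor <;> intro <;> omega

/-- The shape of `T` as a partition. -/
def shape (n : ℕ) (T : SYT n) : n.Partition where
  parts := rowMult n T
  parts_pos := by
    intro i hi
    exact (Multiset.mem_filter.1 hi).2
  parts_sum := by
    have h1 : (rowMult n T).sum = ∑ r : Fin n, rowLen n T r := by
      unfold rowMult
      have h2 : ∀ s : Multiset ℕ, (s.filter (fun x => 0 < x)).sum = s.sum := by
        intro s
        induction s using Multiset.induction_on with
        | empty => simp
        | cons a s ih =>
          rw [Multiset.filter_cons]
          split_ifs with h
          · simp [ih]
          · have : a = 0 := by omega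
            simp [ih, this]
      rw [h2]; rfl
    rw [h1]
    unfold rowLen
    rw [← Finset.card_eq_sum_card_fiberwise (f := fun i => (T.1 i).1) (by intro x _; simp)]
    simp

end GrowthRSK

/-- `Σ_{w ∈ Sₙ, w² = id} x^{des(w)} = Σ_{λ ⊢ n} Sk_λ(x)`. -/
theorem stmt12 (n : ℕ) :
    ∑ w : {w : Equiv.Perm (Fin n) // w * w = 1},
      MvPolynomial.monomial (expOf n (permDesComp n w.1)) (1 : ℂ) =
    ∑ p : n.Partition, Sk n p := by
  classical
  have hR : ∑ p : n.Partition, Sk n p =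
      ∑ T : SYT n, MvPolynomial.monomial (expOf n (desComp n T)) (1 : ℂ) := by
    unfold Sk
    rw [← Finset.sum_fiberwise (s := (Finset.univ : Finset (SYT n))) (g := GrowthRSK.shape n)]
    refine Finset.sum_congr rfl fun p _ => ?_
    refine (Finset.sum_subtype _ (fun T => ?_)
      (fun T => MvPolynomial.monomial (expOf n (desComp n T)) (1 : ℂ))).symm
    simp only [Finset.mem_filter, Finset.mem_univ, true_and]
    exact Nat.Partition.ext_iff
  rw [hR]
  choose F hF using fun w : {w : Equiv.Perm (Fin n) // w * w = 1} => GrowthRSK.R_total n w.1 w.2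
  refine Fintype.sum_bijective F ⟨?_, ?_⟩ _ _ ?_
  · intro w w' e
    have h := hF w'
    rw [← e] at h
    exact Subtype.ext (GrowthRSK.R_inj n _ _ _ (hF w) h)
  · intro T
    obtain ⟨w, hw, h⟩ := GrowthRSK.R_surj n T
    exact ⟨⟨w, hw⟩, GrowthRSK.R_fun n w _ _ (hF ⟨w, hw⟩) h⟩
  · intro w
    rw [permDesComp, desComp, GrowthRSK.R_des n _ _ (hF w)]
end

section
/- The number of involutions in Sₙ equals Σ_{λ ⊢ n} f_λ, and n! = Σ_{λ ⊢ n} f_λ², where f_λ is the number of standard Young tableaux of shape λ. -/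
namespace RSKAux
open Finset

theorem card_eq_sum_rowLens (μ : YoungDiagram) : μ.rowLens.sum = μ.card := by
  have h : μ.card = ∑ i ∈ range (μ.colLen 0), (μ.cells.filter fun c => c.1 = i).card := by
    apply Finset.card_eq_sum_card_fiberwise
    rintro ⟨i, j⟩ h
    have h1 : (i, 0) ∈ μ := μ.up_left_mem le_rfl (Nat.zero_le j) h
    simpa [YoungDiagram.mem_iff_lt_colLen] using h1
  rw [h, YoungDiagram.rowLens, ← Multiset.sum_coe, ← Multiset.map_coe, Multiset.coe_range]
  change ∑ i ∈ range (μ.colLen 0), μ.rowLen i = _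
  exact Finset.sum_congr rfl fun i _ => μ.rowLen_eq_card

theorem rowLens_inj {μ ν : YoungDiagram} (h : (μ.rowLens : Multiset ℕ) = ν.rowLens) : μ = ν := by
  apply YoungDiagram.equivListRowLens.injective
  apply Subtype.ext
  simp only [YoungDiagram.equivListRowLens_apply_coe]
  exact (Multiset.coe_eq_coe.1 h).eq_of_sortedGE μ.rowLens_sorted ν.rowLens_sorted

theorem exists_dg {n : ℕ} (p : n.Partition) : ∃ μ : YoungDiagram, (μ.rowLens : Multiset ℕ) = p.parts := by
  have hs : (p.parts.sort (· ≥ ·)).SortedGE := (Multiset.pairwise_sort _ _).sortedGE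
  refine ⟨YoungDiagram.ofRowLens (p.parts.sort (· ≥ ·)) hs, ?_⟩
  rw [YoungDiagram.rowLens_ofRowLens_eq_self]
  · simp
  · intro x hx
    exact p.parts_pos ((Multiset.mem_sort _).1 hx)

noncomputable def dg {n : ℕ} (p : n.Partition) : YoungDiagram := (exists_dg p).choose

theorem dg_spec {n : ℕ} (p : n.Partition) : ((dg p).rowLens : Multiset ℕ) = p.parts :=
  (exists_dg p).choose_spec

theorem dg_inj {n : ℕ} : Function.Injective (dg (n := n)) := by
  intro p q h
  apply Nat.Partition.ext
  rw [← dg_spec, ← dg_spec, h]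

open Classical in
noncomputable def Y (n : ℕ) : Finset YoungDiagram := univ.image (dg (n := n))

theorem mem_Y {n : ℕ} {μ : YoungDiagram} : μ ∈ Y n ↔ μ.card = n := by
  simp only [Y, mem_image, mem_univ, true_and]
  constructor
  · rintro ⟨p, rfl⟩
    rw [← card_eq_sum_rowLens, ← Multiset.sum_coe, dg_spec, p.parts_sum]
  · intro h
    let p : n.Partition := ⟨μ.rowLens, fun {i} hi => μ.pos_of_mem_rowLens i (by simpa using hi), by
      rw [Multiset.sum_coe, card_eq_sum_rowLens, h]⟩
    exact ⟨p, rowLens_inj (dg_spec p)⟩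

theorem exists_cell {μ ν : YoungDiagram} (h : μ ≤ ν) (hc : ν.card = μ.card + 1) :
    ∃ c, c ∉ μ ∧ ν.cells = insert c μ.cells := by
  have h1 : (ν.cells \ μ.cells).card = 1 := by
    have := Finset.card_sdiff_add_card_eq_card (YoungDiagram.cells_subset_iff.2 h)
    simp only [YoungDiagram.card] at hc
    omega
  obtain ⟨c, hc⟩ := Finset.card_eq_one.1 h1
  refine ⟨c, ?_, ?_⟩
  · have : c ∈ ν.cells \ μ.cells := by rw [hc]; simp
    simpa using (Finset.mem_sdiff.1 this).2
  · rw [Finset.insert_eq, ← hc, Finset.sdiff_union_of_subset (YoungDiagram.cells_subset_iff.2 h)]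

def addRow (μ : YoungDiagram) (i : ℕ) (h : i = 0 ∨ μ.rowLen i < μ.rowLen (i-1)) : YoungDiagram where
  cells := insert (i, μ.rowLen i) μ.cells
  isLowerSet := by
    rintro ⟨a, b⟩ ⟨c, d⟩ ⟨h1, h2⟩ h3
    simp only [coe_insert, Set.mem_insert_iff, Prod.mk.injEq, mem_coe,
      YoungDiagram.mem_cells, YoungDiagram.mem_iff_lt_rowLen] at *
    rcases h3 with ⟨rfl, rfl⟩ | h3
    · by_cases hca : c = a
      · subst hca; omega
      · have := μ.rowLen_anti c (a-1) (by omega)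
        omega
    · have := μ.rowLen_anti c a h1
      omega

def remRow (μ : YoungDiagram) (i : ℕ) (h : μ.rowLen (i+1) < μ.rowLen i) : YoungDiagram where
  cells := μ.cells.erase (i, μ.rowLen i - 1)
  isLowerSet := by
    rintro ⟨a, b⟩ ⟨c, d⟩ ⟨h1, h2⟩ h3
    simp only [coe_erase, Set.mem_sdiff, Set.mem_singleton_iff, Prod.mk.injEq, mem_coe,
      YoungDiagram.mem_cells, YoungDiagram.mem_iff_lt_rowLen] at *
    have := μ.rowLen_anti c a h1
    refine ⟨by omega, ?_⟩
    rintro ⟨rfl, rfl⟩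
    by_cases hca : a = c
    · subst hca; omega
    · have := μ.rowLen_anti (c+1) a (by omega)
      omega

def rem (μ : YoungDiagram) : Finset ℕ := (range (μ.colLen 0)).filter fun i => μ.rowLen (i+1) < μ.rowLen i

theorem mem_rem {μ : YoungDiagram} {i : ℕ} : i ∈ rem μ ↔ μ.rowLen (i+1) < μ.rowLen i := by
  simp only [rem, mem_filter, mem_range, and_iff_right_iff_imp, ← YoungDiagram.mem_iff_lt_colLen,
    YoungDiagram.mem_iff_lt_rowLen]
  omega

open Classical in
theorem card_up {n : ℕ} {μ : YoungDiagram} (hμ : μ ∈ Y n) :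
    ((Y (n+1)).filter (μ ≤ ·)).card = (rem μ).card + 1 := by
  rw [mem_Y] at hμ
  have : (insert 0 ((rem μ).image Nat.succ)).card = (rem μ).card + 1 := by
    rw [card_insert_of_notMem (by simp), card_image_of_injective _ Nat.succ_injective]
  rw [← this]
  symm
  have key : ∀ i, i ∈ insert 0 ((rem μ).image Nat.succ) ↔ (i = 0 ∨ μ.rowLen i < μ.rowLen (i-1)) := by
    intro i
    rcases i with _ | i <;> simp [mem_rem]
  have nm : ∀ i, (i, μ.rowLen i) ∉ μ := by simp [YoungDiagram.mem_iff_lt_rowLen]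
  refine Finset.card_bij (fun i hi => addRow μ i ((key i).1 hi)) ?_ ?_ ?_
  · intro i hi
    simp only [mem_filter, mem_Y]
    constructor
    · simp only [YoungDiagram.card, addRow]
      rw [card_insert_of_notMem (by simpa using nm i)]
      simpa using hμ
    · rw [← YoungDiagram.cells_subset_iff]
      exact subset_insert _ _
  · intro i hi j hj h
    have h2 : (i, μ.rowLen i) ∈ (addRow μ j ((key j).1 hj)).cells := by
      rw [← h]; simp [addRow]
    simp only [addRow, mem_insert, Prod.mk.injEq, YoungDiagram.mem_cells, nm, or_false] at h2
    exact h2.1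
  · intro ν hν
    simp only [mem_filter, mem_Y] at hν
    obtain ⟨⟨i, j⟩, hc, hν'⟩ := exists_cell hν.2 (by omega)
    have hm : ∀ c, c ∈ ν ↔ c = (i,j) ∨ c ∈ μ := by
      intro c; rw [← YoungDiagram.mem_cells, hν']; simp
    have hj : j = μ.rowLen i := by
      rw [YoungDiagram.mem_iff_lt_rowLen] at hc
      by_contra hne
      have h1 : (i, μ.rowLen i) ∈ ν := ν.up_left_mem le_rfl (by omega) ((hm (i,j)).2 (Or.inl rfl))
      rcases (hm _).1 h1 with h1 | h1
      · simp at h1; omega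
      · exact nm _ h1
    subst hj
    have hi : (i = 0 ∨ μ.rowLen i < μ.rowLen (i-1)) := by
      by_contra hne
      have h1 : (i-1, μ.rowLen i) ∈ ν := ν.up_left_mem (by omega) le_rfl ((hm _).2 (Or.inl rfl))
      rcases (hm _).1 h1 with h1 | h1
      · simp at h1; omega
      · rw [YoungDiagram.mem_iff_lt_rowLen] at h1; omega
    exact ⟨i, (key i).2 hi, YoungDiagram.ext hν'.symm⟩

open Classical in
theorem card_down {n : ℕ} {μ : YoungDiagram} (hμ : μ ∈ Y (n+1)) :
    ((Y n).filter (· ≤ μ)).card = (rem μ).card := by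
  rw [mem_Y] at hμ
  symm
  have key : ∀ i, i ∈ rem μ ↔ _ := fun i => mem_rem
  have nm : ∀ i ∈ rem μ, (i, μ.rowLen i - 1) ∈ μ := by
    intro i hi
    rw [mem_rem] at hi
    rw [YoungDiagram.mem_iff_lt_rowLen]; omega
  refine Finset.card_bij (fun i hi => remRow μ i ((key i).1 hi)) ?_ ?_ ?_
  · intro i hi
    simp only [mem_filter, mem_Y]
    constructor
    · simp only [YoungDiagram.card, remRow]
      rw [card_erase_of_mem (by simpa using nm i hi)]
      simp only [YoungDiagram.card] at hμ
      omega
    · rw [← YoungDiagram.cells_subset_iff]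
      exact erase_subset _ _
  · intro i hi j hj h
    by_contra hne
    have h2 : (i, μ.rowLen i - 1) ∉ (remRow μ j ((key j).1 hj)).cells := by
      rw [← h]; simp [remRow]
    simp [remRow, hne, nm i hi] at h2
  · intro ν hν
    simp only [mem_filter, mem_Y] at hν
    obtain ⟨⟨i, j⟩, hc, hν'⟩ := exists_cell hν.2 (by omega)
    have hm : ∀ c, c ∈ μ ↔ c = (i,j) ∨ c ∈ ν := by
      intro c; rw [← YoungDiagram.mem_cells, hν']; simp
    have hij := (hm (i,j)).2 (Or.inl rfl)
    rw [YoungDiagram.mem_iff_lt_rowLen] at hij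
    have hj : j = μ.rowLen i - 1 := by
      by_contra hne
      have h1 : (i, j+1) ∈ μ := by
        rw [YoungDiagram.mem_iff_lt_rowLen]; omega
      rcases (hm _).1 h1 with h1 | h1
      · simp at h1
      · exact hc (ν.up_left_mem le_rfl (by omega) h1)
    have hi : μ.rowLen (i+1) < μ.rowLen i := by
      by_contra hne
      have h1 : (i+1, j) ∈ μ := by
        rw [YoungDiagram.mem_iff_lt_rowLen]; omega
      rcases (hm _).1 h1 with h1 | h1
      · simp at h1
      · exact hc (ν.up_left_mem (by omega) le_rfl h1)
    refine ⟨i, (key i).2 hi, YoungDiagram.ext ?_⟩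
    simp only [remRow, ← hj, hν']
    rw [erase_insert (by simpa using hc)]

theorem card_sup_inf (μ ν : YoungDiagram) : (μ ⊔ ν).card + (μ ⊓ ν).card = μ.card + ν.card := by
  simp only [YoungDiagram.card, YoungDiagram.cells_sup, YoungDiagram.cells_inf]
  exact card_union_add_card_inter _ _

theorem eq_of_le_card {μ ν : YoungDiagram} (h : μ ≤ ν) (hc : ν.card ≤ μ.card) : μ = ν :=
  YoungDiagram.ext (Finset.eq_of_subset_of_card_le (YoungDiagram.cells_subset_iff.2 h) hc)

theorem card_mono {μ ν : YoungDiagram} (h : μ ≤ ν) : μ.card ≤ ν.card :=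
  Finset.card_le_card (YoungDiagram.cells_subset_iff.2 h)

open Classical in
theorem card_common {n : ℕ} {μ ν : YoungDiagram} (hμ : μ ∈ Y (n+1)) (hν : ν ∈ Y (n+1)) (hne : μ ≠ ν) :
    ((Y (n+2)).filter (fun κ => μ ≤ κ ∧ ν ≤ κ)).card =
    ((Y n).filter (fun κ => κ ≤ μ ∧ κ ≤ ν)).card := by
  rw [mem_Y] at hμ hν
  have hs := card_sup_inf μ ν
  have h1 : (μ ⊓ ν).card < n + 1 := by
    by_contra hh
    have e1 := eq_of_le_card (inf_le_left : μ ⊓ ν ≤ μ) (by omega)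
    have e2 := eq_of_le_card (inf_le_right : μ ⊓ ν ≤ ν) (by omega)
    exact hne (e1.symm.trans e2)
  by_cases h : (μ ⊓ ν).card = n
  · have a1 : (Y (n+2)).filter (fun κ => μ ≤ κ ∧ ν ≤ κ) = {μ ⊔ ν} := by
      ext κ
      simp only [mem_filter, mem_Y, mem_singleton]
      constructor
      · rintro ⟨h1, h2, h3⟩
        exact (eq_of_le_card (sup_le h2 h3) (by omega)).symm
      · rintro rfl
        exact ⟨by omega, le_sup_left, le_sup_right⟩
    have a2 : (Y n).filter (fun κ => κ ≤ μ ∧ κ ≤ ν) = {μ ⊓ ν} := by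
      ext κ
      simp only [mem_filter, mem_Y, mem_singleton]
      constructor
      · rintro ⟨h1, h2, h3⟩
        exact (eq_of_le_card (le_inf h2 h3) (by omega))
      · rintro rfl
        exact ⟨by omega, inf_le_left, inf_le_right⟩
    rw [a1, a2]; rfl
  · rw [Finset.filter_eq_empty_iff.2, Finset.filter_eq_empty_iff.2]
    · rintro κ hκ ⟨h2, h3⟩
      rw [mem_Y] at hκ
      have := card_mono (le_inf h2 h3)
      omega
    · rintro κ hκ ⟨h2, h3⟩
      rw [mem_Y] at hκ
      have := card_mono (sup_le h2 h3)
      omega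


theorem Y_zero : Y 0 = {⊥} := by
  ext μ
  rw [mem_Y, mem_singleton, Finset.card_eq_zero]
  constructor
  · intro h; exact YoungDiagram.ext h
  · rintro rfl; rfl

open Classical in
theorem card_common' {n : ℕ} {μ ν : YoungDiagram} (hμ : μ ∈ Y (n+1)) (hν : ν ∈ Y (n+1)) :
    ((Y (n+2)).filter (fun κ => μ ≤ κ ∧ ν ≤ κ)).card =
    ((Y n).filter (fun κ => κ ≤ μ ∧ κ ≤ ν)).card + if μ = ν then 1 else 0 := by
  by_cases h : μ = ν
  · subst h
    simp only [and_self, if_true]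
    rw [card_up hμ, card_down hμ]
  · rw [if_neg h, card_common hμ hν h, add_zero]

section rec
variable (F : ℕ → YoungDiagram → ℕ)

open Classical in
theorem up_sum (h0 : F 0 ⊥ = 1)
    (hF : ∀ n, ∀ ν ∈ Y (n+1), F (n+1) ν = ∑ μ ∈ (Y n).filter (· ≤ ν), F n μ) (n : ℕ) :
    ∀ l ∈ Y n, ∑ ν ∈ (Y (n+1)).filter (l ≤ ·), F (n+1) ν = (n+1) * F n l := by
  induction n with
  | zero =>
    intro l hl
    have hc := card_up hl
    rw [Y_zero, mem_singleton] at hl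
    subst hl
    have hr : rem ⊥ = ∅ := by
      ext i
      rw [mem_rem]
      have : (i, YoungDiagram.rowLen ⊥ (i+1)) ∉ (⊥ : YoungDiagram) := YoungDiagram.notMem_bot _
      rw [YoungDiagram.mem_iff_lt_rowLen] at this
      simpa using this
    rw [hr, card_empty] at hc
    rw [Finset.sum_congr rfl (g := fun _ => 1), sum_const, hc, h0]
    · simp
    intro ν hν
    rw [hF 0 ν (mem_filter.1 hν).1, Y_zero, filter_singleton, if_pos bot_le, sum_singleton, h0]
  | succ n ih =>
    intro l hl
    have e1 : ∑ ν ∈ (Y (n+2)).filter (l ≤ ·), F (n+2) ν =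
        ∑ μ ∈ Y (n+1), ((Y (n+2)).filter (fun κ => l ≤ κ ∧ μ ≤ κ)).card * F (n+1) μ := by
      have e0 : ∑ ν ∈ (Y (n+2)).filter (l ≤ ·), F (n+2) ν = ∑ ν ∈ (Y (n+2)).filter (l ≤ ·),
          ∑ μ ∈ (Y (n+1)).filter (· ≤ ν), F (n+1) μ :=
        Finset.sum_congr rfl fun ν hν => hF (n+1) ν (mem_filter.1 hν).1
      rw [e0]
      simp only [Finset.card_filter, Finset.sum_filter, Finset.sum_mul]
      rw [Finset.sum_comm (s := Y (n+1))]
      refine Finset.sum_congr rfl fun ν _ => ?_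
      by_cases h : l ≤ ν <;> simp [h]
    have e2 : (n+1) * F (n+1) l =
        ∑ μ ∈ Y (n+1), ((Y n).filter (fun κ => κ ≤ l ∧ κ ≤ μ)).card * F (n+1) μ := by
      rw [hF n l hl, Finset.mul_sum, ← Finset.sum_congr rfl fun κ hκ => ih κ (mem_filter.1 hκ).1]
      simp only [Finset.card_filter, Finset.sum_filter, Finset.sum_mul]
      rw [Finset.sum_comm (s := Y (n+1))]
      refine Finset.sum_congr rfl fun ν _ => ?_
      by_cases h : ν ≤ l <;> simp [h]
    rw [e1, Finset.sum_congr rfl fun μ hμ => by rw [card_common' hl hμ, add_mul],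
      Finset.sum_add_distrib, ← e2]
    simp [hl]
    ring

open Classical in
theorem sq_sum (h0 : F 0 ⊥ = 1)
    (hF : ∀ n, ∀ ν ∈ Y (n+1), F (n+1) ν = ∑ μ ∈ (Y n).filter (· ≤ ν), F n μ) (n : ℕ) :
    ∑ μ ∈ Y n, F n μ ^ 2 = n.factorial := by
  induction n with
  | zero => simp [Y_zero, h0]
  | succ n ih =>
    have : ∑ ν ∈ Y (n+1), F (n+1) ν ^ 2 = ∑ μ ∈ Y n, F n μ * ∑ ν ∈ (Y (n+1)).filter (μ ≤ ·), F (n+1) ν := by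
      simp only [Finset.sum_filter, Finset.mul_sum]
      rw [Finset.sum_comm]
      refine Finset.sum_congr rfl fun ν hν => ?_
      rw [sq]
      nth_rw 1 [hF n ν hν]
      rw [Finset.sum_filter, Finset.sum_mul]
      refine Finset.sum_congr rfl fun μ _ => ?_
      by_cases h : μ ≤ ν <;> simp [h]
    rw [this, Finset.sum_congr rfl fun μ hμ => by rw [up_sum F h0 hF n μ hμ]]
    rw [Nat.factorial_succ, ← ih, Finset.mul_sum]
    exact Finset.sum_congr rfl fun μ _ => by ring

open Classical in
theorem sum_succ
    (hF : ∀ n, ∀ ν ∈ Y (n+1), F (n+1) ν = ∑ μ ∈ (Y n).filter (· ≤ ν), F n μ) (n : ℕ) :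
    ∑ ν ∈ Y (n+1), F (n+1) ν = ∑ μ ∈ Y n, ((rem μ).card + 1) * F n μ := by
  rw [Finset.sum_congr rfl fun ν hν => hF n ν hν]
  simp only [Finset.sum_filter]
  rw [Finset.sum_comm]
  refine Finset.sum_congr rfl fun μ hμ => ?_
  rw [← card_up hμ, Finset.card_filter, Finset.sum_mul]
  simp

open Classical in
theorem sum_rec (h0 : F 0 ⊥ = 1)
    (hF : ∀ n, ∀ ν ∈ Y (n+1), F (n+1) ν = ∑ μ ∈ (Y n).filter (· ≤ ν), F n μ) (n : ℕ) :
    ∑ μ ∈ Y (n+2), F (n+2) μ = ∑ μ ∈ Y (n+1), F (n+1) μ + (n+1) * ∑ μ ∈ Y n, F n μ := by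
  rw [sum_succ F hF (n+1)]
  simp only [add_mul, one_mul, Finset.sum_add_distrib]
  rw [add_comm]
  congr 1
  rw [← one_mul (∑ μ ∈ Y n, F n μ), ← mul_assoc, ← add_mul, mul_one, Finset.mul_sum,
    ← Finset.sum_congr rfl fun μ hμ => up_sum F h0 hF n μ hμ]
  simp only [Finset.sum_filter]
  rw [Finset.sum_comm]
  refine Finset.sum_congr rfl fun μ hμ => ?_
  rw [← card_down hμ, Finset.card_filter, Finset.sum_mul]
  simp

open Classical in
theorem sum_one (h0 : F 0 ⊥ = 1)
    (hF : ∀ n, ∀ ν ∈ Y (n+1), F (n+1) ν = ∑ μ ∈ (Y n).filter (· ≤ ν), F n μ) :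
    ∑ μ ∈ Y 1, F 1 μ = 1 := by
  have h := up_sum F h0 hF 0 ⊥ (by simp [Y_zero])
  simpa [h0] using h
end rec

open Classical in
noncomputable def S (n : ℕ) (ν : YoungDiagram) : Finset (Fin n → ℕ × ℕ) :=
  (Fintype.piFinset fun _ => ν.cells).filter fun p =>
    (∀ i j, p i ≤ p j → i ≤ j) ∧ univ.image p = ν.cells

theorem mem_S {n : ℕ} {ν : YoungDiagram} {p : Fin n → ℕ × ℕ} :
    p ∈ S n ν ↔ (∀ i j, p i ≤ p j → i ≤ j) ∧ univ.image p = ν.cells := by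
  simp only [S, mem_filter, Fintype.mem_piFinset, and_iff_right_iff_imp]
  rintro ⟨_, h⟩ i
  rw [← h]; simp

theorem inj_of_mem_S {n : ℕ} {ν : YoungDiagram} {p : Fin n → ℕ × ℕ} (h : p ∈ S n ν) :
    Function.Injective p := fun i j hij =>
  le_antisymm ((mem_S.1 h).1 i j hij.le) ((mem_S.1 h).1 j i hij.ge)

theorem S_zero : (S 0 ⊥).card = 1 := by
  rw [card_eq_one]
  refine ⟨Fin.elim0, ?_⟩
  ext p
  simp only [mem_S, mem_singleton]
  constructor
  · intro _; exact Subsingleton.elim _ _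
  · intro _; exact ⟨fun i => i.elim0, by simp⟩

open Classical in
theorem S_rec (n : ℕ) (ν : YoungDiagram) (hν : ν ∈ Y (n+1)) :
    (S (n+1) ν).card = ∑ μ ∈ (Y n).filter (· ≤ ν), (S n μ).card := by
  rw [mem_Y] at hν
  rw [← Finset.card_biUnion]
  · have himg : ∀ p : Fin (n+1) → ℕ × ℕ, univ.image p = insert (p (Fin.last n)) (univ.image (Fin.init p : Fin n → ℕ × ℕ)) := by
      intro p
      ext c
      unfold Fin.init
      simp only [mem_image, mem_univ, true_and, mem_insert, Fin.exists_fin_succ']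
      grind
    refine Finset.card_bij (fun p _ => (Fin.init p : Fin n → ℕ × ℕ)) ?_ ?_ ?_
    · intro p hp
      have hi := inj_of_mem_S hp
      rw [mem_S] at hp
      rw [mem_biUnion]
      refine ⟨⟨univ.image (Fin.init p : Fin n → ℕ × ℕ), ?_⟩, ?_, ?_⟩
      · intro a b hba ha
        simp only [coe_image, coe_univ, Set.image_univ, Set.mem_range] at ha ⊢
        obtain ⟨i, rfl⟩ := ha
        have h1 : p i.castSucc ∈ ν := by
          rw [← YoungDiagram.mem_cells, ← hp.2]; simp
        have h2 : b ∈ ν.cells := ν.isLowerSet hba h1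
        rw [← hp.2] at h2
        obtain ⟨j, -, rfl⟩ := mem_image.1 h2
        have h3 : j ≤ i.castSucc := hp.1 j _ hba
        exact ⟨⟨j, by have := i.2; have : j.1 ≤ i.1 := h3; omega⟩, rfl⟩
      · rw [mem_filter, mem_Y]
        constructor
        · rw [YoungDiagram.card, card_image_of_injective, card_univ, Fintype.card_fin]
          intro i j h
          exact Fin.castSucc_injective _ (hi h)
        · rw [← YoungDiagram.cells_subset_iff]
          refine subset_trans ?_ hp.2.subset
          exact (subset_insert _ _).trans (himg p).symm.subset
      · rw [mem_S]
        exact ⟨fun i j h => hp.1 _ _ h, rfl⟩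
    · intro p hp q hq h
      have hpi := inj_of_mem_S hp
      have hqi := inj_of_mem_S hq
      rw [mem_S] at hp hq
      have h1 : p (Fin.last n) ∈ univ.image q := by
        rw [hq.2, ← hp.2]; simp
      rw [himg q, mem_insert] at h1
      have h2 : p (Fin.last n) = q (Fin.last n) := by
        rcases h1 with h1 | h1
        · exact h1
        · exfalso
          rw [← h] at h1
          obtain ⟨i, -, hi⟩ := mem_image.1 h1
          exact (Fin.castSucc_lt_last i).ne (hpi hi)
      rw [← Fin.snoc_init_self p, ← Fin.snoc_init_self q, h2]
      rw [h]
    · intro q hq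
      obtain ⟨μ, hμ, hq⟩ := mem_biUnion.1 hq
      rw [mem_filter, mem_Y] at hμ
      obtain ⟨c, hc, hcν⟩ := exists_cell hμ.2 (by omega)
      rw [mem_S] at hq
      refine ⟨Fin.snoc (α := fun _ => ℕ × ℕ) q c, ?_, by simp⟩
      rw [mem_S, himg]
      simp only [Fin.snoc_last, Fin.init_snoc, hq.2, hcν, and_true]
      intro i j
      refine Fin.lastCases ?_ (fun i => ?_) i <;> refine Fin.lastCases ?_ (fun j => ?_) j
      · simp
      · intro h
        simp only [Fin.snoc_last, Fin.snoc_castSucc] at h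
        exfalso
        apply hc
        have : q j ∈ μ := by
          rw [← YoungDiagram.mem_cells, ← hq.2]; simp
        exact μ.isLowerSet h this
      · intro _; exact Fin.le_last _
      · intro h
        simp only [Fin.snoc_castSucc] at h
        exact hq.1 i j h
  · intro μ _ μ' _ hne
    rw [Function.onFun, Finset.disjoint_left]
    intro p hp hp'
    rw [mem_S] at hp hp'
    exact hne (YoungDiagram.ext (hp.2.symm.trans hp'.2))

def cell {n : ℕ} (T : SYT n) (i : Fin n) : ℕ × ℕ := ((T.1 i).1, (T.1 i).2)

theorem cell_inj {n : ℕ} (T : SYT n) : Function.Injective (cell T) := by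
  intro i j h
  simp only [cell, Prod.mk.injEq, Fin.val_inj] at h
  exact T.2.1 (Prod.ext h.1 h.2)

def shp {n : ℕ} (T : SYT n) : YoungDiagram where
  cells := univ.image (cell T)
  isLowerSet := by
    rintro a ⟨c, d⟩ hba ha
    simp only [coe_image, coe_univ, Set.image_univ, Set.mem_range] at ha ⊢
    obtain ⟨i, rfl⟩ := ha
    obtain ⟨h1, h2⟩ := hba
    simp only [cell] at h1 h2
    obtain ⟨j, hj⟩ := T.2.2.1 i ⟨c, by omega⟩ ⟨d, by omega⟩ h1 h2
    exact ⟨j, by simp [cell, hj]⟩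

theorem shp_card {n : ℕ} (T : SYT n) : shp T ∈ Y n := by
  rw [mem_Y]
  simp only [shp, YoungDiagram.card]
  rw [card_image_of_injective _ (cell_inj T), card_univ, Fintype.card_fin]

theorem lt_card {μ : YoungDiagram} {a b : ℕ} (h : (a, b) ∈ μ) : a < μ.card ∧ b < μ.card := by
  constructor
  · have : (range (a+1)).image (fun i => (i, b)) ⊆ μ.cells := by
      intro c hc
      obtain ⟨i, hi, rfl⟩ := mem_image.1 hc
      exact μ.up_left_mem (by simpa [Nat.lt_succ_iff] using hi) le_rfl h
    have := card_le_card this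
    rw [card_image_of_injective _ (fun i j h => (Prod.ext_iff.1 h).1), card_range] at this
    exact this
  · have : (range (b+1)).image (fun i => (a, i)) ⊆ μ.cells := by
      intro c hc
      obtain ⟨i, hi, rfl⟩ := mem_image.1 hc
      exact μ.up_left_mem le_rfl (by simpa [Nat.lt_succ_iff] using hi) h
    have := card_le_card this
    rw [card_image_of_injective _ (fun i j h => (Prod.ext_iff.1 h).2), card_range] at this
    exact this

theorem cell_mem_S {n : ℕ} (T : SYT n) : cell T ∈ S n (shp T) := by
  rw [mem_S]
  refine ⟨?_, rfl⟩
  rintro i j ⟨h1, h2⟩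
  simp only [cell, Fin.val_fin_le] at h1 h2
  obtain ⟨k, hk⟩ := T.2.2.1 j (T.1 i).1 (T.1 j).2 h1 le_rfl
  have hik : i ≤ k := by
    rcases h2.lt_or_eq with h | h
    · exact (T.2.2.2 i k (Or.inl ⟨by rw [hk], by rw [hk]; exact h⟩)).le
    · exact (T.2.1 (by rw [hk, ← h])).le
  have hkj : k ≤ j := by
    rcases h1.lt_or_eq with h | h
    · exact (T.2.2.2 k j (Or.inr ⟨by rw [hk], by rw [hk]; exact h⟩)).le
    · exact (T.2.1 (by rw [hk, h])).le
  exact hik.trans hkj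

theorem card_shp {n : ℕ} {ν : YoungDiagram} (hν : ν ∈ Y n) :
    Nat.card {T : SYT n // shp T = ν} = (S n ν).card := by
  rw [← Nat.card_eq_finsetCard]
  refine Nat.card_eq_of_bijective (fun T => ⟨cell T.1, by have := cell_mem_S T.1; rwa [T.2] at this⟩) ⟨?_, ?_⟩
  · rintro ⟨T, hT⟩ ⟨T', hT'⟩ h
    simp only [Subtype.mk.injEq] at h ⊢
    apply Subtype.ext
    funext i
    have := congrFun h i
    simp only [cell, Prod.mk.injEq, Fin.val_inj] at this
    exact Prod.ext this.1 this.2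
  · rintro ⟨p, hp⟩
    have hi := inj_of_mem_S hp
    have hp' := mem_S.1 hp
    have hmem : ∀ i, p i ∈ ν := by
      intro i; rw [← YoungDiagram.mem_cells, ← hp'.2]; simp
    have hlt : ∀ i, (p i).1 < n ∧ (p i).2 < n := by
      intro i
      have := lt_card (hmem i)
      rwa [mem_Y.1 hν] at this
    let pos : Fin n → Fin n × Fin n := fun i => (⟨(p i).1, (hlt i).1⟩, ⟨(p i).2, (hlt i).2⟩)
    have hpos : IsSYT n pos := by
      refine ⟨?_, ?_, ?_⟩
      · intro i j h
        simp only [pos, Prod.mk.injEq, Fin.mk.injEq] at h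
        exact hi (Prod.ext h.1 h.2)
      · intro i a b ha hb
        have h1 : ((a : ℕ), (b : ℕ)) ∈ ν.cells := ν.up_left_mem ha hb (hmem i)
        rw [← hp'.2] at h1
        obtain ⟨j, -, hj⟩ := mem_image.1 h1
        refine ⟨j, ?_⟩
        simp [pos, hj]
      · intro i j h
        have hle : p i ≤ p j := by
          simp only [pos, Fin.mk.injEq, Fin.mk_lt_mk] at h
          rw [Prod.le_def]
          omega
        refine lt_of_le_of_ne (hp'.1 i j hle) ?_
        rintro rfl
        simp at h
    refine ⟨⟨⟨pos, hpos⟩, ?_⟩, ?_⟩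
    · apply YoungDiagram.ext
      rw [← hp'.2]
      rfl
    · apply Subtype.ext
      rfl

theorem rowMult_eq {n : ℕ} (T : SYT n) : rowMult n T = ((shp T).rowLens : Multiset ℕ) := by
  have h1 : ∀ r : Fin n, rowLen n T r = (shp T).rowLen r := by
    intro r
    rw [YoungDiagram.rowLen_eq_card, YoungDiagram.row, rowLen]
    simp only [shp]
    rw [filter_image, card_image_of_injective _ (cell_inj T)]
    congr 1
    ext i
    rw [mem_filter, mem_filter]
    simp [cell, Fin.ext_iff]
  have h2 : (univ : Finset (Fin n)).val.map (rowLen n T) = (Multiset.range n).map (shp T).rowLen := by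
    rw [Multiset.map_congr rfl fun r _ => h1 r]
    have : (Multiset.range n) = (univ : Finset (Fin n)).val.map Fin.val := by
      have := congrArg Finset.val (Fin.map_valEmbedding_univ (n := n))
      rw [Finset.map_val] at this
      rw [Nat.Iio_eq_range] at this
      exact this.symm
    rw [this, Multiset.map_map]
    rfl
  have hc : (shp T).colLen 0 ≤ n := by
    by_contra h
    have : (n, 0) ∈ shp T := by rw [YoungDiagram.mem_iff_lt_colLen]; omega
    have := (lt_card this).1
    rw [mem_Y.1 (shp_card T)] at this
    omega
  rw [rowMult, h2, Multiset.filter_map, YoungDiagram.rowLens, ← Multiset.map_coe, Multiset.coe_range]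
  congr 1
  have : (range n).filter (fun i => 0 < (shp T).rowLen i) = range ((shp T).colLen 0) := by
    ext i
    rw [mem_filter, mem_range, mem_range, ← YoungDiagram.mem_iff_lt_rowLen,
      YoungDiagram.mem_iff_lt_colLen]
    omega
  exact congrArg Finset.val this

theorem card_parts {n : ℕ} (p : n.Partition) :
    Nat.card {T : SYT n // rowMult n T = p.parts} = (S n (dg p)).card := by
  rw [← card_shp (by simp [Y])]
  apply Nat.card_congr
  refine Equiv.subtypeEquivRight fun T => ?_
  rw [rowMult_eq, ← dg_spec]
  exact ⟨rowLens_inj, fun h => by rw [h]⟩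

theorem sum_parts {n : ℕ} (f : YoungDiagram → ℕ) : ∑ p : n.Partition, f (dg p) = ∑ μ ∈ Y n, f μ := by
  classical
  rw [Y, Finset.sum_image fun _ _ _ _ h => dg_inj h]

section Inv
open Equiv

/-- the number of involutions of a type -/
noncomputable def inv (α : Type) : ℕ := Nat.card {w : Perm α // w * w = 1}

theorem inv_congr {α β : Type} (e : α ≃ β) : inv α = inv β := by
  apply Nat.card_congr
  refine Equiv.subtypeEquiv e.permCongrHom.toEquiv fun w => ?_
  change w * w = 1 ↔ e.permCongrHom w * e.permCongrHom w = 1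
  rw [← map_mul, MulEquiv.map_eq_one_iff]

theorem inv_sub {α : Type} (p : α → Prop) [DecidablePred p] :
    Nat.card {w : Perm α // w * w = 1 ∧ ∀ a, ¬ p a → w a = a} = inv (Subtype p) := by
  symm
  refine Nat.card_eq_of_bijective (fun w => ⟨Perm.ofSubtype w.1, ?_, ?_⟩) ⟨?_, ?_⟩
  · rw [← map_mul, w.2, map_one]
  · intro a ha; exact Perm.ofSubtype_apply_of_not_mem _ ha
  · intro w w' h
    simp only [Subtype.mk.injEq] at h
    exact Subtype.ext (Perm.ofSubtype_injective h)
  · rintro ⟨w, h1, h2⟩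
    obtain ⟨v, hv⟩ := (Perm.subtypeEquivSubtypePerm p).surjective ⟨w, h2⟩
    have hv' : Perm.ofSubtype v = w := congrArg Subtype.val hv
    refine ⟨⟨v, ?_⟩, ?_⟩
    · apply Perm.ofSubtype_injective
      rw [map_mul, hv', h1, map_one]
    · exact Subtype.ext hv'

theorem inv_fix {α : Type} [DecidableEq α] (a : α) :
    Nat.card {w : Perm α // w * w = 1 ∧ w a = a} = inv {x // x ≠ a} := by
  rw [← inv_sub]
  apply Nat.card_congr
  refine Equiv.subtypeEquivRight fun w => ?_
  simp

theorem inv_swap {α : Type} [DecidableEq α] (a b : α) (hab : a ≠ b) :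
    Nat.card {w : Perm α // w * w = 1 ∧ w a = b} = inv {x // x ≠ a ∧ x ≠ b} := by
  rw [← inv_sub]
  have key : ∀ w : Perm α, w * w = 1 → w a = b → w * swap a b = swap a b * w := by
    intro w hw h
    have hb : w b = a := by rw [← h, ← Perm.mul_apply, hw, Perm.one_apply]
    rw [mul_swap_eq_swap_mul, h, hb, swap_comm]
  have key2 : ∀ w : Perm α, w a = a → w b = b → w * swap a b = swap a b * w := by
    intro w h hb
    rw [mul_swap_eq_swap_mul, h, hb]
  apply Nat.card_congr
  refine Equiv.subtypeEquiv (Equiv.mulRight (swap a b)) fun w => ?_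
  simp only [Equiv.coe_mulRight, Perm.mul_apply]
  constructor
  · rintro ⟨h1, h2⟩
    have hb : w b = a := by rw [← h2, ← Perm.mul_apply, h1, Perm.one_apply]
    constructor
    · rw [mul_assoc, ← mul_assoc (swap a b), ← key w h1 h2, mul_assoc, swap_mul_self, mul_one, h1]
    · intro x hx
      by_cases hxa : x = a
      · subst hxa; simpa using hb
      · have : x = b := by tauto
        subst this; simpa using h2
  · rintro ⟨h1, h2⟩
    have ha : w b = a := by simpa using h2 a (by simp)
    have hb : w a = b := by simpa using h2 b (by simp)
    refine ⟨?_, hb⟩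
    have hc : w * swap a b = swap a b * w := by
      rw [mul_swap_eq_swap_mul, ha, hb, swap_comm]
    rw [mul_assoc, ← mul_assoc (swap a b), ← hc, mul_assoc, swap_mul_self, mul_one] at h1
    exact h1

theorem inv_rec (n : ℕ) : inv (Fin (n+2)) = inv (Fin (n+1)) + (n+1) * inv (Fin n) := by
  classical
  have h : inv (Fin (n+2)) = ∑ b : Fin (n+2), Nat.card {w : Perm (Fin (n+2)) // w * w = 1 ∧ w 0 = b} := by
    rw [inv, ← Nat.card_sigma]
    refine Nat.card_congr
      { toFun := fun w => ⟨w.1 0, w.1, w.2, rfl⟩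
        invFun := fun w => ⟨w.2.1, w.2.2.1⟩
        left_inv := fun _ => rfl
        right_inv := ?_ }
    rintro ⟨b, w, h1, rfl⟩
    rfl
  rw [h, Fin.sum_univ_succ]
  congr 1
  · rw [inv_fix]
    apply inv_congr
    exact Fintype.equivFinOfCardEq (by simp)
  · rw [Finset.sum_congr rfl (g := fun _ => inv (Fin n))]
    · simp
    · intro b _
      rw [inv_swap _ _ (Fin.succ_ne_zero b).symm]
      apply inv_congr
      apply Fintype.equivFinOfCardEq
      rw [Fintype.card_subtype]
      have : (univ.filter fun x : Fin (n+2) => x ≠ 0 ∧ x ≠ b.succ) = (univ.erase 0).erase b.succ := by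
        ext x; simp [and_comm]
      rw [this, card_erase_of_mem (by simp), card_erase_of_mem (by simp)]
      simp

theorem inv_zero : inv (Fin 0) = 1 := by
  rw [inv, Nat.card_eq_one_iff_unique]
  exact ⟨⟨fun a b => Subtype.ext (Subsingleton.elim _ _)⟩, ⟨1, by simp⟩⟩

theorem inv_one : inv (Fin 1) = 1 := by
  rw [inv, Nat.card_eq_one_iff_unique]
  exact ⟨⟨fun a b => Subtype.ext (Subsingleton.elim _ _)⟩, ⟨1, by simp⟩⟩

end Inv

theorem inv_eq (n : ℕ) : inv (Fin n) = ∑ μ ∈ Y n, (S n μ).card := by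
  let F : ℕ → YoungDiagram → ℕ := fun n μ => (S n μ).card
  change inv (Fin n) = ∑ μ ∈ Y n, F n μ
  induction n using Nat.twoStepInduction with
  | zero => rw [inv_zero, Y_zero, sum_singleton]; exact S_zero.symm
  | one => rw [inv_one, sum_one F S_zero S_rec]
  | more n h1 h2 => rw [inv_rec, sum_rec F S_zero S_rec, h1, h2]

end RSKAux

open Nat in
/-- The number of involutions in `Sₙ` equals `Σ_{λ⊢n} f_λ`, and `n! = Σ_{λ⊢n} f_λ²`,
where `f_λ` is the number of standard Young tableaux of shape `λ`. -/
theorem stmt13 (n : ℕ) :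
    Nat.card {w : Equiv.Perm (Fin n) // w * w = 1} =
      ∑ p : n.Partition, Nat.card {T : SYT n // rowMult n T = p.parts} ∧
    n ! = ∑ p : n.Partition, (Nat.card {T : SYT n // rowMult n T = p.parts}) ^ 2 := by
  constructor
  · simp only [RSKAux.card_parts]
    rw [RSKAux.sum_parts (fun μ => (RSKAux.S n μ).card)]
    exact RSKAux.inv_eq n
  · simp only [RSKAux.card_parts]
    rw [RSKAux.sum_parts (fun μ => (RSKAux.S n μ).card ^ 2)]
    exact (RSKAux.sq_sum (fun n μ => (RSKAux.S n μ).card) RSKAux.S_zero RSKAux.S_rec n).symm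
end

section
/- Let λ be a partition of n with λ ≠ ∅. The maximum of ℓ(des(T)) over standard Young tableaux T of shape λ equals n - (λ₁ - 1), and the minimum equals ℓ(λ), the number of rows of λ. -/
theorem desComp_length_eq (n : ℕ) (hn : 0 < n) (T : SYT n) :
    (desComp n T).length = (desSet n T).card + 1 := by
  unfold desComp
  rw [CompositionAsSet.toComposition_length]
  unfold CompositionAsSet.length
  have h : ((compositionAsSetEquiv n).symm (desSet n T)).boundaries =
      insert 0 (insert (Fin.last n) ((desSet n T).image
        (fun j : Fin (n - 1) => (⟨(j : ℕ) + 1, by have := j.isLt; omega⟩ : Fin n.succ)))) := by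
    ext i
    simp only [compositionAsSetEquiv, Equiv.coe_fn_symm_mk, Finset.mem_insert, Finset.mem_image,
      Set.mem_toFinset, Set.mem_ofPred_eq, Fin.ext_iff, exists_prop, eq_comm]
  rw [h, Finset.card_insert_of_notMem, Finset.card_insert_of_notMem, Finset.card_image_of_injective]
  · omega
  · intro a b hab
    simp only [Fin.mk.injEq] at hab
    ext; omega
  · simp only [Finset.mem_image, Fin.ext_iff, Fin.val_last, not_exists, not_and]
    intro x _; have := x.isLt; omega
  · simp only [Finset.mem_insert, Finset.mem_image, Fin.ext_iff, Fin.val_last, not_or, not_exists,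
      not_and]
    exact ⟨by simp; omega, fun x _ => by simp⟩

theorem rowLen_pos_iff (n : ℕ) (T : SYT n) (r : Fin n) :
    0 < rowLen n T r ↔ ∃ i, (T.1 i).1 = r := by
  simp [rowLen, Finset.card_pos, Finset.Nonempty]

theorem exists_row_zero (n : ℕ) (hn : 0 < n) (T : SYT n) : ∃ i, (T.1 i).1 = ⟨0, hn⟩ := by
  obtain ⟨j, hj⟩ := T.2.2.1 ⟨0, hn⟩ ⟨0, hn⟩ ⟨0, hn⟩ (Nat.zero_le _) (Nat.zero_le _)
  exact ⟨j, by rw [hj]⟩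

theorem card_rowMult (n : ℕ) (hn : 0 < n) (T : SYT n) :
    (rowMult n T).card =
      (Finset.univ.filter fun r : Fin n => r ≠ ⟨0, hn⟩ ∧ ∃ i, (T.1 i).1 = r).card + 1 := by
  have h : (rowMult n T).card = (Finset.univ.filter fun r : Fin n => ∃ i, (T.1 i).1 = r).card := by
    unfold rowMult
    rw [Multiset.filter_map, Multiset.card_map]
    simp only [Function.comp_def, rowLen_pos_iff]
    rfl
  rw [h, ← Finset.card_insert_of_notMem (a := (⟨0, hn⟩ : Fin n))]
  · congr 1
    ext r
    have := exists_row_zero n hn T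
    simp only [Finset.mem_filter, Finset.mem_univ, true_and, Finset.mem_insert]
    by_cases hr : r = ⟨0, hn⟩
    · subst hr; simpa using this
    · simp [hr]
  · simp

theorem rowLen_le_zero (n : ℕ) (hn : 0 < n) (T : SYT n) (r : Fin n) :
    rowLen n T r ≤ rowLen n T ⟨0, hn⟩ := by
  have key : ∀ i, ∃ j, T.1 j = (⟨0, hn⟩, (T.1 i).2) := fun i =>
    T.2.2.1 i _ _ (Nat.zero_le _) le_rfl
  choose f hf using key
  apply Finset.card_le_card_of_injOn f
  · intro i _
    simp [hf]
  · intro i hi j hj hij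
    simp only [Finset.coe_filter, Finset.mem_univ, true_and, Set.mem_ofPred_eq] at hi hj
    apply T.2.1
    have h1 := hf i
    rw [hij, hf j] at h1
    exact Prod.ext (hi.trans hj.symm) (Prod.mk.inj h1).2.symm

theorem sup_rowMult (n : ℕ) (hn : 0 < n) (T : SYT n) :
    (rowMult n T).sup = rowLen n T ⟨0, hn⟩ := by
  apply le_antisymm
  · rw [Multiset.sup_le]
    intro b hb
    simp only [rowMult, Multiset.mem_filter, Multiset.mem_map] at hb
    obtain ⟨⟨r, _, rfl⟩, _⟩ := hb
    exact rowLen_le_zero n hn T r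
  · apply Multiset.le_sup
    simp only [rowMult, Multiset.mem_filter, Multiset.mem_map]
    exact ⟨⟨_, Finset.mem_univ_val _, rfl⟩, (rowLen_pos_iff _ _ _).2 (exists_row_zero n hn T)⟩

theorem card_not_row_zero (n : ℕ) (hn : 0 < n) (T : SYT n) :
    rowLen n T ⟨0, hn⟩ + (Finset.univ.filter fun i => (T.1 i).1 ≠ ⟨0, hn⟩).card = n := by
  have := Finset.card_filter_add_card_filter_not (s := (Finset.univ : Finset (Fin n)))
    (fun i => (T.1 i).1 = ⟨0, hn⟩)
  simpa [rowLen] using this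

theorem desSet_card_le (n : ℕ) (hn : 0 < n) (T : SYT n) :
    (desSet n T).card ≤ (Finset.univ.filter fun i => (T.1 i).1 ≠ ⟨0, hn⟩).card := by
  apply Finset.card_le_card_of_injOn
    (fun i : Fin (n - 1) => (⟨(i : ℕ) + 1, by have := i.isLt; omega⟩ : Fin n))
  · intro i hi
    simp only [desSet, Finset.coe_filter, Finset.mem_univ, true_and, Set.mem_ofPred_eq] at hi ⊢
    intro h
    rw [h] at hi
    exact absurd hi (Nat.not_lt_zero _)
  · intro a _ b _ hab
    simp only [Fin.mk.injEq] at hab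
    ext; omega

theorem card_rows_le (n : ℕ) (hn : 0 < n) (T : SYT n) :
    (Finset.univ.filter fun r : Fin n => r ≠ ⟨0, hn⟩ ∧ ∃ i, (T.1 i).1 = r).card
      ≤ (desSet n T).card := by
  apply Finset.card_le_card_of_surjOn
    (fun i : Fin (n - 1) => (T.1 (⟨(i : ℕ) + 1, by have := i.isLt; omega⟩ : Fin n)).1)
  intro r hr
  simp only [Finset.coe_filter, Finset.mem_univ, true_and, Set.mem_ofPred_eq] at hr
  obtain ⟨hr0, hne⟩ := hr
  obtain ⟨j, hj, hmin⟩ := WellFounded.has_min (wellFounded_lt (α := Fin n))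
    {i | (T.1 i).1 = r} hne
  simp only [Set.mem_ofPred_eq] at hj hmin
  have hr0' : 0 < (r : ℕ) := by
    rcases Nat.eq_zero_or_pos (r : ℕ) with h | h
    · exact absurd (Fin.ext h) hr0
    · exact h
  have hj0 : 0 < (j : ℕ) := by
    obtain ⟨k, hk⟩ := T.2.2.1 j ⟨0, hn⟩ (T.1 j).2 (Nat.zero_le _) le_rfl
    have : k < j := T.2.2.2 k j (Or.inr ⟨by rw [hk], by rw [hk, hj]; exact hr0'⟩)
    exact lt_of_le_of_lt (Nat.zero_le _) this
  have hjlt := j.isLt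
  refine ⟨⟨(j : ℕ) - 1, by omega⟩, ?_, ?_⟩
  · simp only [desSet, Finset.coe_filter, Finset.mem_univ, true_and, Set.mem_ofPred_eq]
    have hjj : (⟨(j : ℕ) - 1 + 1, by omega⟩ : Fin n) = j := Fin.ext (by simp; omega)
    rw [hjj, hj]
    by_contra hcon
    have hcon := not_lt.1 hcon
    set m : Fin n := ⟨(j : ℕ) - 1, by omega⟩ with hm
    obtain ⟨k, hk⟩ := T.2.2.1 m r (T.1 m).2 hcon le_rfl
    have hkm : k ≤ m := by
      rcases hcon.lt_or_eq with h | h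
      · exact (T.2.2.2 k m (Or.inr ⟨by rw [hk], by rw [hk]; exact h⟩)).le
      · exact le_of_eq (T.2.1 (by rw [hk]; exact Prod.ext h rfl))
    apply hmin k (by rw [hk])
    apply lt_of_le_of_lt hkm
    rw [Fin.lt_def]; simp [hm]; omega
  · have hjj : (⟨(j : ℕ) - 1 + 1, by omega⟩ : Fin n) = j := Fin.ext (by simp; omega)
    simp only [hjj, hj]

theorem desSet_card_le_rows (n : ℕ) (hn : 0 < n) (T : SYT n)
    (hT : ∀ i j, i ≤ j → (T.1 i).1 ≤ (T.1 j).1) :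
    (desSet n T).card ≤
      (Finset.univ.filter fun r : Fin n => r ≠ ⟨0, hn⟩ ∧ ∃ i, (T.1 i).1 = r).card := by
  have aux : ∀ a ∈ desSet n T, ∀ b ∈ desSet n T, a < b →
      (T.1 (⟨(a : ℕ) + 1, by have := a.isLt; omega⟩ : Fin n)).1 <
      (T.1 (⟨(b : ℕ) + 1, by have := b.isLt; omega⟩ : Fin n)).1 := by
    intro a _ b hb hab
    simp only [desSet, Finset.mem_filter, Finset.mem_univ, true_and] at hb
    refine lt_of_le_of_lt (hT _ _ ?_) hb
    rw [Fin.le_def]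
    exact hab
  apply Finset.card_le_card_of_injOn
    (fun i : Fin (n - 1) => (T.1 (⟨(i : ℕ) + 1, by have := i.isLt; omega⟩ : Fin n)).1)
  · intro i hi
    simp only [desSet, Finset.coe_filter, Finset.mem_univ, true_and, Set.mem_ofPred_eq] at hi ⊢
    refine ⟨?_, _, rfl⟩
    intro h
    rw [h] at hi
    exact absurd hi (Nat.not_lt_zero _)
  · intro a ha b hb hab
    rcases lt_trichotomy a b with h | h | h
    · exact absurd hab (aux a ha b hb h).ne
    · exact h
    · exact absurd hab (aux b hb a ha h).ne'

theorem le_desSet_card (n : ℕ) (hn : 0 < n) (T : SYT n)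
    (hT : ∀ i j, i < j → (T.1 i).2 < (T.1 j).2 ∨ ((T.1 i).2 = (T.1 j).2 ∧ (T.1 i).1 < (T.1 j).1)) :
    (Finset.univ.filter fun i => (T.1 i).1 ≠ ⟨0, hn⟩).card ≤ (desSet n T).card := by
  apply Finset.card_le_card_of_surjOn
    (fun i : Fin (n - 1) => (⟨(i : ℕ) + 1, by have := i.isLt; omega⟩ : Fin n))
  intro j hj
  simp only [Finset.coe_filter, Finset.mem_univ, true_and, Set.mem_ofPred_eq] at hj
  have hr0 : 0 < ((T.1 j).1 : ℕ) := by
    rcases Nat.eq_zero_or_pos ((T.1 j).1 : ℕ) with h | h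
    · exact absurd (Fin.ext h) hj
    · exact h
  obtain ⟨k, hk⟩ := T.2.2.1 j ⟨0, hn⟩ (T.1 j).2 (Nat.zero_le _) le_rfl
  have hkj : k < j := T.2.2.2 k j (Or.inr ⟨by rw [hk], by rw [hk]; exact hr0⟩)
  have hkj' : (k : ℕ) < j := hkj
  have hjlt := j.isLt
  have hjj : (⟨(j : ℕ) - 1 + 1, by omega⟩ : Fin n) = j := Fin.ext (by simp; omega)
  refine ⟨⟨(j : ℕ) - 1, by omega⟩, ?_, hjj⟩
  simp only [desSet, Finset.coe_filter, Finset.mem_univ, true_and, Set.mem_ofPred_eq]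
  rw [hjj]
  set m : Fin n := ⟨(j : ℕ) - 1, by omega⟩ with hm
  have hmj : m < j := by rw [Fin.lt_def]; simp [hm]; omega
  have hkm : k ≤ m := by rw [Fin.le_def]; simp [hm]; omega
  have hc : (T.1 j).2 ≤ (T.1 m).2 := by
    have hk2 : (T.1 k).2 = (T.1 j).2 := by rw [hk]
    rw [← hk2]
    rcases hkm.lt_or_eq with h | h
    · rcases hT _ _ h with h' | h'
      · exact h'.le
      · exact h'.1.le
    · rw [h]
  rcases hT _ _ hmj with h | h
  · exact absurd h (not_lt.2 hc)
  · exact h.2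

/-- Tableaux obtained by reading the cells of a Young diagram along a linear order. -/
theorem exists_SYT (n : ℕ) (hn : 0 < n) (p : n.Partition) (g : ℕ × ℕ → ℕ ×ₗ ℕ)
    (hg : StrictMono g) (hinj : Function.Injective g) :
    ∃ T : SYT n, rowMult n T = p.parts ∧ ∀ i j, i < j →
      g (((T.1 i).1 : ℕ), ((T.1 i).2 : ℕ)) < g (((T.1 j).1 : ℕ), ((T.1 j).2 : ℕ)) := by
  classical
  obtain ⟨μ, hμ⟩ : ∃ μ : YoungDiagram, (μ.rowLens : Multiset ℕ) = p.parts := by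
    refine ⟨YoungDiagram.ofRowLens (p.parts.sort (· ≥ ·))
      (Multiset.pairwise_sort _ _).sortedGE, ?_⟩
    rw [YoungDiagram.rowLens_ofRowLens_eq_self, Multiset.sort_eq]
    intro x hx
    exact p.parts_pos (by simpa using hx)
  have hcard : μ.cells.card = n := by
    have h1 : μ.cells.card = ∑ r ∈ Finset.range (μ.colLen 0), μ.rowLen r := by
      rw [Finset.card_eq_sum_card_fiberwise (f := Prod.fst) (t := Finset.range (μ.colLen 0))]
      · apply Finset.sum_congr rfl
        intro r _
        rw [YoungDiagram.rowLen_eq_card]; rfl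
      · rintro ⟨a, b⟩ hab
        simp only [Finset.coe_range, Set.mem_Iio]
        rw [← YoungDiagram.mem_iff_lt_colLen]
        exact μ.up_left_mem le_rfl (Nat.zero_le _) (by simpa using hab)
    rw [h1]
    have h2 := p.parts_sum
    rw [← hμ, Multiset.sum_coe, YoungDiagram.rowLens] at h2
    rw [← h2]
    rfl
  have hcol : μ.colLen 0 ≤ n := by
    rw [← hcard, YoungDiagram.colLen_eq_card]
    exact Finset.card_le_card (Finset.filter_subset _ _)
  have hrow : μ.rowLen 0 ≤ n := by
    rw [← hcard, YoungDiagram.rowLen_eq_card]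
    exact Finset.card_le_card (Finset.filter_subset _ _)
  have hb : ∀ a b, (a, b) ∈ μ → a < n ∧ b < n := by
    intro a b hab
    refine ⟨lt_of_lt_of_le ?_ hcol, lt_of_lt_of_le ?_ hrow⟩
    · rw [← YoungDiagram.mem_iff_lt_colLen]
      exact μ.up_left_mem le_rfl (Nat.zero_le _) hab
    · rw [← YoungDiagram.mem_iff_lt_rowLen]
      exact μ.up_left_mem (Nat.zero_le _) le_rfl hab
  have hcard' : (μ.cells.image g).card = n := by
    rw [Finset.card_image_of_injective _ hinj, hcard]
  have hf : ∀ i : Fin n, ∃ c ∈ μ.cells, g c = (μ.cells.image g).orderEmbOfFin hcard' i := by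
    intro i
    simpa only [Finset.mem_image] using Finset.orderEmbOfFin_mem _ hcard' i
  choose f hfm hfg using hf
  have hflt : ∀ i j, g (f i) < g (f j) ↔ i < j := by
    intro i j
    rw [hfg, hfg]
    exact OrderEmbedding.lt_iff_lt _
  have hfinj : Function.Injective f := by
    intro i j hij
    have := (hfg i).symm.trans ((congrArg g hij).trans (hfg j))
    exact ((μ.cells.image g).orderEmbOfFin hcard').injective this
  have hfsurj : ∀ c ∈ μ.cells, ∃ i, f i = c := by
    intro c hc
    have : g c ∈ Set.range ((μ.cells.image g).orderEmbOfFin hcard') := by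
      rw [Finset.range_orderEmbOfFin]
      exact Finset.mem_coe.2 (Finset.mem_image_of_mem g hc)
    obtain ⟨i, hi⟩ := this
    exact ⟨i, hinj ((hfg i).trans hi)⟩
  let pos : Fin n → Fin n × Fin n := fun i =>
    (⟨(f i).1, (hb _ _ (by simpa using hfm i)).1⟩, ⟨(f i).2, (hb _ _ (by simpa using hfm i)).2⟩)
  have hpos1 : ∀ i, ((pos i).1 : ℕ) = (f i).1 := fun i => rfl
  have hpos2 : ∀ i, ((pos i).2 : ℕ) = (f i).2 := fun i => rfl
  have hsyt : IsSYT n pos := by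
    refine ⟨?_, ?_, ?_⟩
    · intro i j hij
      apply hfinj
      apply Prod.ext
      · rw [← hpos1, ← hpos1, hij]
      · rw [← hpos2, ← hpos2, hij]
    · intro i a b ha hb'
      have hm : ((a : ℕ), (b : ℕ)) ∈ μ :=
        μ.up_left_mem (i2 := (f i).1) (j2 := (f i).2) ha hb' (by simpa using hfm i)
      obtain ⟨j, hj⟩ := hfsurj _ (by simpa using hm)
      refine ⟨j, Prod.ext (Fin.ext ?_) (Fin.ext ?_)⟩
      · rw [hpos1, hj]
      · rw [hpos2, hj]
    · intro i j hij
      rw [← hflt]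
      apply hg
      rw [Prod.lt_iff]
      rcases hij with ⟨h1, h2⟩ | ⟨h1, h2⟩
      · exact Or.inr ⟨le_of_eq (congrArg Fin.val h1), h2⟩
      · exact Or.inl ⟨h2, le_of_eq (congrArg Fin.val h1)⟩
  refine ⟨⟨pos, hsyt⟩, ?_, ?_⟩
  · have hrl : ∀ r : Fin n, rowLen n ⟨pos, hsyt⟩ r = μ.rowLen r := by
      intro r
      rw [YoungDiagram.rowLen_eq_card]
      unfold rowLen
      apply Finset.card_bij (fun i _ => f i)
      · intro i hi
        simp only [Finset.mem_filter, Finset.mem_univ, true_and] at hi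
        rw [YoungDiagram.mem_row_iff]
        exact ⟨by simpa using hfm i, by rw [← hi]⟩
      · intro i _ j _ h
        exact hfinj h
      · intro c hc
        rw [YoungDiagram.mem_row_iff] at hc
        obtain ⟨i, hi⟩ := hfsurj c (by simpa using hc.1)
        refine ⟨i, ?_, hi⟩
        simp only [Finset.mem_filter, Finset.mem_univ, true_and]
        apply Fin.ext
        rw [hpos1, hi, hc.2]
    rw [← hμ]
    unfold rowMult
    have e1 : (Finset.univ : Finset (Fin n)).val.map (rowLen n ⟨pos, hsyt⟩) =
        (Multiset.range n).map μ.rowLen := by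
      have : (Multiset.range n) = (Finset.univ : Finset (Fin n)).val.map Fin.val := by
        have h := congrArg Finset.val (Fin.map_valEmbedding_univ (n := n))
        rw [Finset.map_val, Nat.Iio_eq_range] at h
        exact h.symm
      rw [this, Multiset.map_map]
      exact Multiset.map_congr rfl (fun r _ => hrl r)
    rw [e1, Multiset.filter_map]
    have e2 : Multiset.filter ((fun x => 0 < x) ∘ μ.rowLen) (Multiset.range n) =
        Multiset.range (μ.colLen 0) := by
      have : (Finset.range n).filter (fun x => 0 < μ.rowLen x) = Finset.range (μ.colLen 0) := by
        ext r
        rw [Finset.mem_filter, Finset.mem_range, Finset.mem_range,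
          ← YoungDiagram.mem_iff_lt_rowLen, YoungDiagram.mem_iff_lt_colLen]
        omega
      exact congrArg Finset.val this
    rw [e2]
    rfl
  · intro i j hij
    exact (hflt i j).2 hij

/-- For a nonempty partition `λ` of `n`, the maximum of `ℓ(des T)` over standard Young
tableaux `T` of shape `λ` is `n - (λ₁ - 1)`, and the minimum is `ℓ(λ)`. -/
theorem stmt15 (n : ℕ) (hn : 0 < n) (p : n.Partition) :
    IsGreatest {k | ∃ T : SYT n, rowMult n T = p.parts ∧ (desComp n T).length = k}
      (n - (p.parts.sup - 1)) ∧
    IsLeast {k | ∃ T : SYT n, rowMult n T = p.parts ∧ (desComp n T).length = k}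
      p.parts.card := by
  have ub : ∀ T : SYT n, rowMult n T = p.parts → (desComp n T).length ≤ n - (p.parts.sup - 1) := by
    intro T hT
    rw [desComp_length_eq n hn, ← hT, sup_rowMult n hn]
    have h1 := desSet_card_le n hn T
    have h2 := card_not_row_zero n hn T
    have h3 := (rowLen_pos_iff _ _ _).2 (exists_row_zero n hn T)
    omega
  have lb : ∀ T : SYT n, rowMult n T = p.parts → p.parts.card ≤ (desComp n T).length := by
    intro T hT
    rw [desComp_length_eq n hn, ← hT, card_rowMult n hn]
    have h1 := card_rows_le n hn T
    omega
  refine ⟨⟨?_, ?_⟩, ⟨?_, ?_⟩⟩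
  · obtain ⟨T, hT, hlex⟩ := exists_SYT n hn p (fun c => toLex (c.2, c.1))
      (by
        rintro ⟨a, b⟩ ⟨c, d⟩ h
        rw [Prod.lt_iff] at h
        rw [Prod.Lex.toLex_lt_toLex]
        simp only at h ⊢
        omega)
      (by
        rintro ⟨a, b⟩ ⟨c, d⟩ h
        have := toLex.injective h
        simp only [Prod.mk.injEq] at this ⊢
        exact ⟨this.2, this.1⟩)
    refine ⟨T, hT, le_antisymm (ub T hT) ?_⟩
    rw [desComp_length_eq n hn, ← hT, sup_rowMult n hn]
    have h1 := le_desSet_card n hn T (by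
      intro i j hij
      have := hlex i j hij
      rw [Prod.Lex.toLex_lt_toLex] at this
      rcases this with h | h
      · exact Or.inl h
      · exact Or.inr ⟨Fin.ext h.1, h.2⟩)
    have h2 := card_not_row_zero n hn T
    omega
  · rintro k ⟨T, hT, rfl⟩
    exact ub T hT
  · obtain ⟨T, hT, hlex⟩ := exists_SYT n hn p (fun c => toLex c)
      (by
        rintro ⟨a, b⟩ ⟨c, d⟩ h
        rw [Prod.lt_iff] at h
        rw [Prod.Lex.toLex_lt_toLex]
        simp only at h ⊢
        omega)
      toLex.injective
    refine ⟨T, hT, le_antisymm ?_ (lb T hT)⟩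
    rw [desComp_length_eq n hn, ← hT, card_rowMult n hn]
    have h1 := desSet_card_le_rows n hn T (by
      intro i j hij
      rcases hij.lt_or_eq with h | h
      · have := hlex i j h
        rw [Prod.Lex.toLex_lt_toLex] at this
        rcases this with h | h
        · exact le_of_lt h
        · exact le_of_eq (Fin.ext h.1)
      · rw [h])
    omega
  · rintro k ⟨T, hT, rfl⟩
    exact lb T hT
end
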